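/- Strict monotonicity in the potential: Let V₁, V₂ : Ω → ℝ be measurable functions, each bounded on every compact subset of Ω, with V₁ ≤ V₂ almost everywhere and such that the set {x ∈ Ω : V₁(x) < V₂(x)} has positive Lebesgue measure. If Q_{V₁}(u) ≥ 0 for every u ∈ C_c^∞(Ω), then Q_{V₂} has a weighted spectral gap in Ω: there exists a continuous function W : Ω → ℝ with W > 0 everywhere such that Q_{V₂}(u) ≥ ∫_Ω W|u|^p dx for all u ∈ C_c^∞(Ω). -/

import Mathlib

open MeasureTheory Filter
open scoped RealInnerProductSpace Topology

noncomputable section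

/-- Euclidean space `ℝ^d`. -/
abbrev Euc (d : ℕ) := EuclideanSpace ℝ (Fin d)

/-- A test function on `Ω`: smooth with compact support contained in `Ω`. -/
def IsTestFun {d : ℕ} (Ω : Set (Euc d)) (u : Euc d → ℝ) : Prop :=
  ContDiff ℝ (⊤ : ℕ∞) u ∧ HasCompactSupport u ∧ tsupport u ⊆ Ω

/-- The energy functional `Q(u) = ∫_Ω (|∇u|^p + V |u|^p) dx`. -/
def energyQ {d : ℕ} (Ω : Set (Euc d)) (V : Euc d → ℝ) (p : ℝ) (u : Euc d → ℝ) : ℝ :=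
  ∫ x in Ω, (‖gradient u x‖ ^ p + V x * |u x| ^ p)

/-- `V` is measurable and bounded on every compact subset of `Ω`. -/
def LocBddPotential {d : ℕ} (Ω : Set (Euc d)) (V : Euc d → ℝ) : Prop :=
  Measurable V ∧ ∀ K : Set (Euc d), K ⊆ Ω → IsCompact K → ∃ C : ℝ, ∀ x ∈ K, |V x| ≤ C

/-- A positive supersolution of `Q'(u) = 0` in `Ω`. -/
def IsPositiveSupersolution {d : ℕ} (Ω : Set (Euc d)) (V : Euc d → ℝ) (p : ℝ)
    (v : Euc d → ℝ) : Prop :=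
  ContDiffOn ℝ 1 v Ω ∧ (∀ x ∈ Ω, 0 < v x) ∧
    ∀ φ : Euc d → ℝ, IsTestFun Ω φ → (∀ x, 0 ≤ φ x) →
      0 ≤ ∫ x in Ω, (‖gradient v x‖ ^ (p - 2) * ⟪gradient v x, gradient φ x⟫
            + V x * v x ^ (p - 1) * φ x)

/-- A positive (weak) solution of `Q'(u) = 0` in `Ω`. -/
def IsPositiveSolution {d : ℕ} (Ω : Set (Euc d)) (V : Euc d → ℝ) (p : ℝ)
    (v : Euc d → ℝ) : Prop :=
  ContDiffOn ℝ 1 v Ω ∧ (∀ x ∈ Ω, 0 < v x) ∧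
    ∀ φ : Euc d → ℝ, IsTestFun Ω φ →
      (∫ x in Ω, (‖gradient v x‖ ^ (p - 2) * ⟪gradient v x, gradient φ x⟫
            + V x * v x ^ (p - 1) * φ x)) = 0

/-- A null sequence for the functional `Q`. -/
def IsNullSequence {d : ℕ} (Ω : Set (Euc d)) (V : Euc d → ℝ) (p : ℝ)
    (u : ℕ → Euc d → ℝ) : Prop :=
  (∀ k, IsTestFun Ω (u k)) ∧ (∀ k x, 0 ≤ u k x) ∧
    ∃ B : Set (Euc d), IsOpen B ∧ IsCompact (closure B) ∧ closure B ⊆ Ω ∧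
      (∀ k, (∫ x in B, u k x ^ p) = 1) ∧
      Tendsto (fun k => energyQ Ω V p (u k)) atTop (𝓝 0)

/-- A ground state of `Q`: a positive `C¹` function on `Ω` which is the limit in
`L^p_loc(Ω)` of a null sequence. -/
def IsGroundState {d : ℕ} (Ω : Set (Euc d)) (V : Euc d → ℝ) (p : ℝ)
    (v : Euc d → ℝ) : Prop :=
  ContDiffOn ℝ 1 v Ω ∧ (∀ x ∈ Ω, 0 < v x) ∧
    ∃ u : ℕ → Euc d → ℝ, IsNullSequence Ω V p u ∧
      ∀ K : Set (Euc d), K ⊆ Ω → IsCompact K →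
        Tendsto (fun k => ∫ x in K, |u k x - v x| ^ p) atTop (𝓝 0)

/-- `Q` has a weighted spectral gap (is strictly positive) in `Ω`. -/
def HasSpectralGap {d : ℕ} (Ω : Set (Euc d)) (V : Euc d → ℝ) (p : ℝ) : Prop :=
  ∃ W : Euc d → ℝ, ContinuousOn W Ω ∧ (∀ x ∈ Ω, 0 < W x) ∧
    ∀ u : Euc d → ℝ, IsTestFun Ω u → (∫ x in Ω, W x * |u x| ^ p) ≤ energyQ Ω V p u

/-- `c_B`: the infimum of `Q(u)` over test functions with `∫_B |u|^p = 1`. -/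
def cB {d : ℕ} (Ω B : Set (Euc d)) (V : Euc d → ℝ) (p : ℝ) : ℝ :=
  sInf { q : ℝ | ∃ u : Euc d → ℝ, IsTestFun Ω u ∧ (∫ x in B, |u x| ^ p) = 1 ∧
    q = energyQ Ω V p u }

/-- The Picone Lagrangian `L(u,v)`. -/
def piconeL {d : ℕ} (p : ℝ) (u v : Euc d → ℝ) (x : Euc d) : ℝ :=
  ‖gradient u x‖ ^ p + (p - 1) * (u x / v x) ^ p * ‖gradient v x‖ ^ p
    - p * (u x / v x) ^ (p - 1) *
        (‖gradient v x‖ ^ (p - 2) * ⟪gradient u x, gradient v x⟫)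

open scoped ENNReal

/-- Change of variables `y ↦ a + t y` for nonnegative functions. -/
lemma lintegral_affine {d : ℕ} (G : Euc d → ℝ≥0∞) (hG : Measurable G) (a : Euc d) {t : ℝ}
    (ht : 1 / 2 ≤ t) :
    ∫⁻ y, G (a + t • y) ≤ 2 ^ d * ∫⁻ y, G y := by
  have ht0 : t ≠ 0 := by linarith
  have h1 : ∫⁻ y, G (a + t • y) = ∫⁻ y, G (a + y) ∂(Measure.map (fun y : Euc d => t • y) volume) := by
    have hm : Measurable fun y : Euc d => G (a + y) := hG.comp (measurable_const_add a)
    rw [lintegral_map hm (measurable_const_smul t)]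
  rw [h1, Measure.map_addHaar_smul _ ht0, lintegral_smul_measure, lintegral_add_left_eq_self G a,
    smul_eq_mul]
  gcongr
  rw [finrank_euclideanSpace, Fintype.card_fin, abs_of_pos (by positivity)]
  rw [show (2 : ℝ≥0∞) ^ d = ENNReal.ofReal (2 ^ d) by rw [ENNReal.ofReal_pow (by norm_num)]; simp]
  apply ENNReal.ofReal_le_ofReal
  rw [← inv_pow]
  gcongr
  rw [inv_le_comm₀ (by linarith) (by norm_num)]
  linarith

lemma lintegral_segment_half {d : ℕ} (B : Set (Euc d)) (hB : MeasurableSet B) (hc : Convex ℝ B)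
    (G : Euc d → ℝ≥0∞) (hG : Measurable G) {t : ℝ} (ht : 1 / 2 ≤ t) (ht1 : t ≤ 1) :
    ∫⁻ x in B, ∫⁻ y in B, G ((1 - t) • x + t • y) ≤ 2 ^ d * volume B * ∫⁻ y in B, G y := by
  have key : ∀ x ∈ B, ∫⁻ y in B, G ((1 - t) • x + t • y) ≤ 2 ^ d * ∫⁻ y in B, G y := by
    intro x hx
    rw [← lintegral_indicator hB, ← lintegral_indicator hB]
    refine le_trans (lintegral_mono ?_)
      (lintegral_affine (B.indicator G) (hG.indicator hB) ((1 - t) • x) ht)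
    intro y
    by_cases hy : y ∈ B
    · have : (1 - t) • x + t • y ∈ B := hc hx hy (by linarith) (by linarith) (by ring)
      simp [hy, this]
    · simp [hy]
  calc ∫⁻ x in B, ∫⁻ y in B, G ((1 - t) • x + t • y)
      ≤ ∫⁻ x in B, 2 ^ d * ∫⁻ y in B, G y := setLIntegral_mono' hB key
    _ = 2 ^ d * volume B * ∫⁻ y in B, G y := by
      rw [setLIntegral_const]; ring

lemma lintegral_segment {d : ℕ} (B : Set (Euc d)) (hB : MeasurableSet B) (hc : Convex ℝ B)
    (G : Euc d → ℝ≥0∞) (hG : Measurable G) {t : ℝ} (ht0 : 0 ≤ t) (ht1 : t ≤ 1) :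
    ∫⁻ x in B, ∫⁻ y in B, G ((1 - t) • x + t • y) ≤ 2 ^ d * volume B * ∫⁻ y in B, G y := by
  rcases le_total (1 / 2) t with h | h
  · exact lintegral_segment_half B hB hc G hG h ht1
  · have := lintegral_segment_half B hB hc G hG (t := 1 - t) (by linarith) (by linarith)
    rw [lintegral_lintegral_swap]
    · convert this using 5
      rw [add_comm]; simp
    · apply Measurable.aemeasurable
      apply hG.comp
      fun_prop

/-- Pointwise bound for differences along segments. -/
lemma seg_bound {d : ℕ} {p : ℝ} (hp : 1 ≤ p) (v : Euc d → ℝ) (hv : ContDiff ℝ 1 v) (x y : Euc d) :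
    ENNReal.ofReal (|v y - v x| ^ p) ≤ ENNReal.ofReal (‖y - x‖ ^ p) *
      ∫⁻ t in Set.Ioc (0 : ℝ) 1, ENNReal.ofReal (‖fderiv ℝ v ((1 - t) • x + t • y)‖ ^ p) := by
  have hcd : Continuous (fderiv ℝ v) := hv.continuous_fderiv one_ne_zero
  have hcg : Continuous fun t : ℝ => ‖fderiv ℝ v ((1 - t) • x + t • y)‖ := by fun_prop
  have hcgp : Continuous fun t : ℝ => ‖fderiv ℝ v ((1 - t) • x + t • y)‖ ^ p :=
    hcg.rpow_const (fun _ => Or.inr (by linarith))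
  have hd1 : ∀ t : ℝ, HasDerivAt (fun t : ℝ => v ((1 - t) • x + t • y))
      (fderiv ℝ v ((1 - t) • x + t • y) (y - x)) t := by
    intro t
    have h1 : HasDerivAt (fun t : ℝ => (1 - t) • x + t • y) (y - x) t := by
      have h0 : HasDerivAt (fun t : ℝ => (1 - t) • x + t • y) ((-1 : ℝ) • x + (1 : ℝ) • y) t :=
        (((hasDerivAt_id t).const_sub 1).smul_const x).add ((hasDerivAt_id t).smul_const y)
      rwa [show (-1 : ℝ) • x + (1 : ℝ) • y = y - x by module] at h0
    exact ((hv.differentiable one_ne_zero _).hasFDerivAt).comp_hasDerivAt t h1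
  have hftc : v y - v x = ∫ t in (0 : ℝ)..1, fderiv ℝ v ((1 - t) • x + t • y) (y - x) := by
    rw [intervalIntegral.integral_eq_sub_of_hasDerivAt (fun t _ => hd1 t)]
    · simp
    · apply Continuous.intervalIntegrable
      fun_prop
  have h2 : |v y - v x| ≤ ‖y - x‖ * ∫ t in Set.Ioc (0 : ℝ) 1, ‖fderiv ℝ v ((1 - t) • x + t • y)‖ := by
    rw [hftc, intervalIntegral.integral_of_le zero_le_one, ← Real.norm_eq_abs, ← integral_const_mul]
    refine norm_integral_le_of_norm_le ?_ (Eventually.of_forall fun t => ?_)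
    · exact ((hcg.const_mul _).integrableOn_Ioc)
    · rw [mul_comm]; exact ContinuousLinearMap.le_opNorm _ _
  have : IsProbabilityMeasure (volume.restrict (Set.Ioc (0 : ℝ) 1)) := ⟨by simp⟩
  have h3 : (∫ t in Set.Ioc (0 : ℝ) 1, ‖fderiv ℝ v ((1 - t) • x + t • y)‖) ^ p ≤
      ∫ t in Set.Ioc (0 : ℝ) 1, ‖fderiv ℝ v ((1 - t) • x + t • y)‖ ^ p := by
    have := (convexOn_rpow hp).map_integral_le (μ := volume.restrict (Set.Ioc (0 : ℝ) 1))
      (f := fun t : ℝ => ‖fderiv ℝ v ((1 - t) • x + t • y)‖)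
      (continuousOn_id.rpow_const (fun _ _ => Or.inr (by linarith))) isClosed_Ici
      (Eventually.of_forall fun t => norm_nonneg _) hcg.integrableOn_Ioc hcgp.integrableOn_Ioc
    exact this
  rw [← ofReal_integral_eq_lintegral_ofReal hcgp.integrableOn_Ioc
    (Eventually.of_forall fun t => by positivity), ← ENNReal.ofReal_mul (by positivity)]
  apply ENNReal.ofReal_le_ofReal
  calc |v y - v x| ^ p ≤ (‖y - x‖ * ∫ t in Set.Ioc (0 : ℝ) 1, ‖fderiv ℝ v ((1 - t) • x + t • y)‖) ^ p := by
        gcongr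
    _ = ‖y - x‖ ^ p * (∫ t in Set.Ioc (0 : ℝ) 1, ‖fderiv ℝ v ((1 - t) • x + t • y)‖) ^ p := by
        rw [Real.mul_rpow (norm_nonneg _)]
        exact integral_nonneg fun t => norm_nonneg _
    _ ≤ _ := by gcongr

lemma cont_integrableOn_ball {d : ℕ} {f : Euc d → ℝ} (hf : Continuous f) (x : Euc d) (r : ℝ) :
    IntegrableOn f (Metric.ball x r) :=
  (hf.continuousOn.integrableOn_compact (isCompact_closedBall x r)).mono_set
    Metric.ball_subset_closedBall

lemma cont_integrableOn_ball_prod {d : ℕ} {f : Euc d × Euc d → ℝ} (hf : Continuous f) (x : Euc d)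
    (r : ℝ) : IntegrableOn f (Metric.ball x r ×ˢ Metric.ball x r) (volume.prod volume) := by
  rw [← Measure.volume_eq_prod]
  exact (hf.continuousOn.integrableOn_compact
    ((isCompact_closedBall x r).prod (isCompact_closedBall x r))).mono_set
    (Set.prod_mono Metric.ball_subset_closedBall Metric.ball_subset_closedBall)

lemma triple_swap {d : ℕ} (B : Set (Euc d)) (I : Set ℝ) (c : ℝ≥0∞)
    (H : Euc d → Euc d → ℝ → ℝ≥0∞)
    (hH : Measurable fun q : (Euc d × Euc d) × ℝ => H q.1.1 q.1.2 q.2) :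
    ∫⁻ x in B, ∫⁻ y in B, c * ∫⁻ t in I, H x y t =
      c * ∫⁻ t in I, ∫⁻ x in B, ∫⁻ y in B, H x y t := by
  have hm1 : Measurable fun q : Euc d × Euc d => ∫⁻ t in I, H q.1 q.2 t :=
    hH.lintegral_prod_right'
  have e1 : ∀ x, ∫⁻ y in B, c * ∫⁻ t in I, H x y t = c * ∫⁻ t in I, ∫⁻ y in B, H x y t := by
    intro x
    have hm1x : Measurable fun y : Euc d => ∫⁻ t in I, H x y t :=
      hm1.comp (measurable_prodMk_left (x := x))
    rw [lintegral_const_mul _ hm1x]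
    congr 1
    have hx : Measurable fun q : Euc d × ℝ => H x q.1 q.2 :=
      hH.comp (by fun_prop : Measurable fun q : Euc d × ℝ => ((x, q.1), q.2))
    exact lintegral_lintegral_swap hx.aemeasurable
  simp_rw [e1]
  have hm2 : Measurable fun q : Euc d × ℝ => ∫⁻ y in B, H q.1 y q.2 := by
    have : Measurable fun w : (Euc d × ℝ) × Euc d => H w.1.1 w.2 w.1.2 :=
      hH.comp (by fun_prop : Measurable fun w : (Euc d × ℝ) × Euc d => ((w.1.1, w.2), w.1.2))
    exact this.lintegral_prod_right'
  have hm3 : Measurable fun x : Euc d => ∫⁻ t in I, ∫⁻ y in B, H x y t :=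
    hm2.lintegral_prod_right'
  rw [lintegral_const_mul _ hm3]
  congr 1
  exact lintegral_lintegral_swap hm2.aemeasurable

/-- The Poincare inequality on a ball, in double-integral form. -/
lemma poincare {d : ℕ} {p : ℝ} (hp : 1 ≤ p) (v : Euc d → ℝ) (hv : ContDiff ℝ 1 v) (x₀ : Euc d)
    {ρ : ℝ} (hρ : 0 < ρ) :
    ∫ z in Metric.ball x₀ ρ ×ˢ Metric.ball x₀ ρ, |v z.1 - v z.2| ^ p ∂(volume.prod volume) ≤
      (2 * ρ) ^ p * 2 ^ d * volume.real (Metric.ball x₀ ρ) *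
        ∫ x in Metric.ball x₀ ρ, ‖fderiv ℝ v x‖ ^ p := by
  set B := Metric.ball x₀ ρ with hBdef
  have hB : MeasurableSet B := Metric.isOpen_ball.measurableSet
  have hcd : Continuous (fderiv ℝ v) := hv.continuous_fderiv one_ne_zero
  have hcv : Continuous v := hv.continuous
  have hcD : Continuous fun x => ‖fderiv ℝ v x‖ ^ p :=
    hcd.norm.rpow_const (fun _ => Or.inr (by linarith))
  set G : Euc d → ℝ≥0∞ := fun x => ENNReal.ofReal (‖fderiv ℝ v x‖ ^ p) with hGdef
  have hG : Measurable G := hcD.measurable.ennreal_ofReal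
  have hcF : Continuous fun z : Euc d × Euc d => |v z.1 - v z.2| ^ p :=
    (by fun_prop : Continuous fun z : Euc d × Euc d => |v z.1 - v z.2|).rpow_const
      (fun _ => Or.inr (by linarith))
  have hfin : volume B ≠ ⊤ := measure_ball_lt_top.ne
  have hI : 0 ≤ ∫ x in B, ‖fderiv ℝ v x‖ ^ p := integral_nonneg fun x => by positivity
  rw [← ENNReal.ofReal_le_ofReal_iff (by positivity)]
  rw [ofReal_integral_eq_lintegral_ofReal (cont_integrableOn_ball_prod hcF x₀ ρ)
    (Eventually.of_forall fun z => by positivity)]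
  rw [ENNReal.ofReal_mul (by positivity), ENNReal.ofReal_mul (by positivity),
    ENNReal.ofReal_mul (by positivity),
    ofReal_integral_eq_lintegral_ofReal (cont_integrableOn_ball hcD x₀ ρ)
    (Eventually.of_forall fun z => by positivity), ofReal_measureReal hfin,
    ← Measure.prod_restrict]
  rw [lintegral_prod _ hcF.measurable.ennreal_ofReal.aemeasurable]
  calc ∫⁻ x in B, ∫⁻ y in B, ENNReal.ofReal (|v x - v y| ^ p)
      ≤ ∫⁻ x in B, ∫⁻ y in B, ENNReal.ofReal ((2 * ρ) ^ p) *
          ∫⁻ t in Set.Ioc (0 : ℝ) 1, G ((1 - t) • x + t • y) := by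
        refine setLIntegral_mono' hB fun x hx => setLIntegral_mono' hB fun y hy => ?_
        have := seg_bound hp v hv x y
        rw [abs_sub_comm]
        refine this.trans ?_
        gcongr
        have h1 := Metric.mem_ball.1 hx
        have h2 := Metric.mem_ball.1 hy
        have h3 := dist_triangle_right y x x₀
        rw [dist_eq_norm] at h3
        linarith
    _ = ENNReal.ofReal ((2 * ρ) ^ p) * ∫⁻ t in Set.Ioc (0 : ℝ) 1,
          ∫⁻ x in B, ∫⁻ y in B, G ((1 - t) • x + t • y) := by
        exact triple_swap B (Set.Ioc (0 : ℝ) 1) _ (fun x y t => G ((1 - t) • x + t • y))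
          (hG.comp (by fun_prop))
    _ ≤ ENNReal.ofReal ((2 * ρ) ^ p) * ∫⁻ t in Set.Ioc (0 : ℝ) 1,
          2 ^ d * volume B * ∫⁻ y in B, G y := by
        refine mul_le_mul' le_rfl ?_
        refine setLIntegral_mono' measurableSet_Ioc fun t ht => ?_
        exact lintegral_segment B hB (convex_ball _ _) G hG ht.1.le ht.2
    _ = _ := by
        rw [setLIntegral_const, Real.volume_Ioc]
        rw [show ENNReal.ofReal (2 ^ d) = 2 ^ d by rw [ENNReal.ofReal_pow (by norm_num)]; simp]
        simp; ring

/-- Averaging over small balls. -/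
lemma ball_averaging {d : ℕ} (x₀ : Euc d) {r δ : ℝ} (hδ : 0 < δ) (F G : Euc d → ℝ≥0∞)
    (hF : Measurable F) (hG : Measurable G) (c : ℝ≥0∞)
    (h : ∀ y ∈ Metric.ball x₀ r, ∫⁻ x in Metric.ball y δ, F x ≤
      c * volume (Metric.ball (0 : Euc d) δ) + ∫⁻ x in Metric.ball y δ, G x) :
    ∫⁻ x in Metric.ball x₀ (r - δ), F x ≤
      c * volume (Metric.ball x₀ r) + ∫⁻ x in Metric.ball x₀ (r + δ), G x := by
  set b := volume (Metric.ball (0 : Euc d) δ) with hb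
  have hb0 : b ≠ 0 := (Metric.measure_ball_pos _ _ hδ).ne'
  have hbt : b ≠ ⊤ := measure_ball_lt_top.ne
  have swap : ∀ H : Euc d → ℝ≥0∞, Measurable H →
      ∫⁻ y in Metric.ball x₀ r, ∫⁻ x in Metric.ball y δ, H x =
      ∫⁻ x, H x * volume (Metric.ball x δ ∩ Metric.ball x₀ r) := by
    intro H hH
    have hset : MeasurableSet {q : Euc d × Euc d | dist q.2 q.1 < δ} :=
      (isOpen_lt (by fun_prop) continuous_const).measurableSet
    have e1 : ∀ y, ∫⁻ x in Metric.ball y δ, H x =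
        ∫⁻ x, ({q : Euc d × Euc d | dist q.2 q.1 < δ}.indicator (fun q => H q.2)) (y, x) := by
      intro y
      rw [← lintegral_indicator Metric.isOpen_ball.measurableSet]
      rfl
    simp_rw [e1]
    rw [lintegral_lintegral_swap (by
      exact ((hH.comp measurable_snd).indicator hset).aemeasurable)]
    congr 1
    ext x
    have e2 : ∀ y, ({q : Euc d × Euc d | dist q.2 q.1 < δ}.indicator (fun q => H q.2)) (y, x) =
        (Metric.ball x δ).indicator (fun _ => H x) y := by
      intro y
      simp only [Set.indicator, Set.mem_ofPred_eq, Metric.mem_ball, dist_comm x y]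
    simp_rw [e2]
    rw [lintegral_indicator_const Metric.isOpen_ball.measurableSet,
      Measure.restrict_apply Metric.isOpen_ball.measurableSet]
  have lower : b * ∫⁻ x in Metric.ball x₀ (r - δ), F x ≤
      ∫⁻ y in Metric.ball x₀ r, ∫⁻ x in Metric.ball y δ, F x := by
    rw [swap F hF, ← lintegral_const_mul b hF, ← lintegral_indicator Metric.isOpen_ball.measurableSet]
    refine lintegral_mono fun x => ?_
    by_cases hx : x ∈ Metric.ball x₀ (r - δ)
    · have : Metric.ball x δ ∩ Metric.ball x₀ r = Metric.ball x δ := by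
        apply Set.inter_eq_left.2
        apply Metric.ball_subset_ball'
        have := Metric.mem_ball.1 hx
        linarith
      simp only [hx, Set.indicator_of_mem, this]
      rw [mul_comm, hb, Measure.addHaar_ball_center volume x]
    · simp [hx]
  have upper : ∫⁻ y in Metric.ball x₀ r, ∫⁻ x in Metric.ball y δ, G x ≤
      b * ∫⁻ x in Metric.ball x₀ (r + δ), G x := by
    rw [swap G hG, ← lintegral_const_mul b hG, ← lintegral_indicator Metric.isOpen_ball.measurableSet]
    refine lintegral_mono fun x => ?_
    by_cases hx : x ∈ Metric.ball x₀ (r + δ)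
    · simp only [hx, Set.indicator_of_mem]
      rw [mul_comm]
      gcongr
      rw [hb, ← Measure.addHaar_ball_center volume x]
      exact measure_mono Set.inter_subset_left
    · have : Metric.ball x δ ∩ Metric.ball x₀ r = ∅ := by
        apply Set.disjoint_iff_inter_eq_empty.1
        apply Metric.ball_disjoint_ball
        have : ¬ (dist x x₀ < r + δ) := hx
        linarith
      simp [this]
  have h2 : b * ∫⁻ x in Metric.ball x₀ (r - δ), F x ≤
      b * (c * volume (Metric.ball x₀ r) + ∫⁻ x in Metric.ball x₀ (r + δ), G x) := by
    calc _ ≤ _ := lower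
      _ ≤ ∫⁻ y in Metric.ball x₀ r, (c * b + ∫⁻ x in Metric.ball y δ, G x) :=
        setLIntegral_mono' Metric.isOpen_ball.measurableSet h
      _ = c * b * volume (Metric.ball x₀ r) + ∫⁻ y in Metric.ball x₀ r, ∫⁻ x in Metric.ball y δ, G x := by
        rw [lintegral_add_left measurable_const, setLIntegral_const]
      _ ≤ c * b * volume (Metric.ball x₀ r) + b * ∫⁻ x in Metric.ball x₀ (r + δ), G x := by gcongr
      _ = _ := by ring
  exact (ENNReal.mul_le_mul_iff_right hb0 hbt).1 h2

lemma add_rpow_two {a b p : ℝ} (ha : 0 ≤ a) (hb : 0 ≤ b) (hp : 0 ≤ p) :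
    (a + b) ^ p ≤ 2 ^ p * (a ^ p + b ^ p) := by
  have ha' := Real.rpow_nonneg ha p
  have hb' := Real.rpow_nonneg hb p
  have h2 : (0 : ℝ) ≤ 2 ^ p := by positivity
  rcases le_total a b with h | h
  · calc (a + b) ^ p ≤ (2 * b) ^ p := by gcongr; linarith
      _ = 2 ^ p * b ^ p := Real.mul_rpow (by norm_num) hb
      _ ≤ _ := by gcongr; linarith
  · calc (a + b) ^ p ≤ (2 * a) ^ p := by gcongr; linarith
      _ = 2 ^ p * a ^ p := Real.mul_rpow (by norm_num) ha
      _ ≤ _ := by gcongr; linarith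

lemma self_le_one_add_rpow {t p : ℝ} (ht : 0 ≤ t) (hp : 1 ≤ p) : t ≤ 1 + t ^ p := by
  have := Real.rpow_nonneg ht p
  rcases le_total t 1 with h | h
  · linarith
  · have := Real.self_le_rpow_of_one_le h hp
    linarith

lemma prod_int_fst {d : ℕ} (A₁ A₂ : Set (Euc d)) (f : Euc d → ℝ) :
    ∫ z in A₁ ×ˢ A₂, f z.1 ∂(volume.prod volume) = volume.real A₂ * ∫ x in A₁, f x := by
  rw [← Measure.prod_restrict, integral_fun_fst]
  simp [Measure.real]

lemma prod_int_snd {d : ℕ} (A₁ A₂ : Set (Euc d)) (f : Euc d → ℝ) :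
    ∫ z in A₁ ×ˢ A₂, f z.2 ∂(volume.prod volume) = volume.real A₁ * ∫ x in A₂, f x := by
  rw [← Measure.prod_restrict, integral_fun_snd]
  simp [Measure.real]

lemma prod_int_const {d : ℕ} (A₁ A₂ : Set (Euc d)) (c : ℝ) :
    ∫ _ in A₁ ×ˢ A₂, c ∂((volume : Measure (Euc d)).prod (volume : Measure (Euc d))) =
      volume.real A₁ * volume.real A₂ * c := by
  simp [Measure.real, Measure.prod_prod]

/-- Comparison of the mean values over two subsets of a ball. -/
lemma avg_compare {d : ℕ} {p : ℝ} (hp : 1 ≤ p) (v : Euc d → ℝ) (hv : ContDiff ℝ 1 v) (x₀ : Euc d)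
    {ρ : ℝ} (hρ : 0 < ρ) (A₁ A₂ : Set (Euc d))
    (h₁ : A₁ ⊆ Metric.ball x₀ ρ) (h₂ : A₂ ⊆ Metric.ball x₀ ρ) (m₁ : MeasurableSet A₁)
    (m₂ : MeasurableSet A₂) :
    volume.real A₂ * ∫ x in A₁, v x ≤ volume.real A₁ * (∫ x in A₂, v x)
      + volume.real A₁ * volume.real A₂ +
      (2 * ρ) ^ p * 2 ^ d * volume.real (Metric.ball x₀ ρ) *
        ∫ x in Metric.ball x₀ ρ, ‖fderiv ℝ v x‖ ^ p := by
  have hcv : Continuous v := hv.continuous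
  have hcF : Continuous fun z : Euc d × Euc d => |v z.1 - v z.2| ^ p :=
    (by fun_prop : Continuous fun z : Euc d × Euc d => |v z.1 - v z.2|).rpow_const
      (fun _ => Or.inr (by linarith))
  have hsub : A₁ ×ˢ A₂ ⊆ Metric.ball x₀ ρ ×ˢ Metric.ball x₀ ρ := Set.prod_mono h₁ h₂
  have I : ∀ f : Euc d × Euc d → ℝ, Continuous f →
      IntegrableOn f (A₁ ×ˢ A₂) (volume.prod volume) :=
    fun f hf => (cont_integrableOn_ball_prod hf x₀ ρ).mono_set hsub
  have I1 := I (fun z => v z.1) (by fun_prop)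
  have I2 := I (fun z => v z.2) (by fun_prop)
  have I3 := I (fun _ => (1 : ℝ)) (by fun_prop)
  have I4 := I _ hcF
  have I23 := I (fun z => v z.2 + 1) (by fun_prop)
  have key : ∫ z in A₁ ×ˢ A₂, v z.1 ∂(volume.prod volume) ≤
      ∫ z in A₁ ×ˢ A₂, ((v z.2 + 1) + |v z.1 - v z.2| ^ p) ∂(volume.prod volume) := by
    refine setIntegral_mono_on I1 (I23.add I4) (m₁.prod m₂) fun z _ => ?_
    have := self_le_one_add_rpow (abs_nonneg (v z.1 - v z.2)) hp
    have := le_abs_self (v z.1 - v z.2)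
    linarith
  rw [integral_add I23 I4, integral_add I2 I3, prod_int_fst, prod_int_snd,
    prod_int_const] at key
  have hP : ∫ z in A₁ ×ˢ A₂, |v z.1 - v z.2| ^ p ∂(volume.prod volume) ≤
      ∫ z in Metric.ball x₀ ρ ×ˢ Metric.ball x₀ ρ, |v z.1 - v z.2| ^ p ∂(volume.prod volume) :=
    setIntegral_mono_set (cont_integrableOn_ball_prod hcF x₀ ρ)
      (Eventually.of_forall fun z => by positivity) hsub.eventuallyLE
  have := poincare hp v hv x₀ hρ
  linarith

/-- Local `L^p` bound when `u` is at most `l` on half of the ball. -/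
lemma half_bound {d : ℕ} {p : ℝ} (hp : 1 ≤ p) (u : Euc d → ℝ) (hu : ContDiff ℝ 1 u) (y : Euc d)
    {δ l : ℝ} (hδ : 0 < δ) (hl : 0 ≤ l)
    (hh : volume.real (Metric.ball y δ ∩ {x | l < |u x|}) ≤ volume.real (Metric.ball y δ) / 2) :
    ∫ x in Metric.ball y δ, |u x| ^ p ≤ 2 ^ p * l ^ p * volume.real (Metric.ball y δ) +
      2 ^ p * (2 * (2 * δ) ^ p * 2 ^ d) * ∫ x in Metric.ball y δ, ‖fderiv ℝ u x‖ ^ p := by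
  set b := Metric.ball y δ with hb
  have hcu : Continuous u := hu.continuous
  have hcU : Continuous fun x => |u x| ^ p :=
    hcu.abs.rpow_const (fun _ => Or.inr (by linarith))
  have hcF : Continuous fun z : Euc d × Euc d => |u z.1 - u z.2| ^ p :=
    (by fun_prop : Continuous fun z : Euc d × Euc d => |u z.1 - u z.2|).rpow_const
      (fun _ => Or.inr (by linarith))
  have mb : MeasurableSet b := Metric.isOpen_ball.measurableSet
  have mS : MeasurableSet {x | l < |u x|} := (isOpen_lt continuous_const hcu.abs).measurableSet
  set G := b \ {x | l < |u x|} with hG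
  have mG : MeasurableSet G := mb.diff mS
  have hsub : b ×ˢ G ⊆ b ×ˢ b := Set.prod_mono le_rfl Set.sdiff_subset
  have hbpos : 0 < volume.real b := ENNReal.toReal_pos (Metric.measure_ball_pos _ _ hδ).ne' measure_ball_lt_top.ne
  have hGvol : volume.real b / 2 ≤ volume.real G := by
    have := measureReal_inter_add_sdiff (μ := volume) (s := b) mS (measure_ball_lt_top.ne)
    linarith
  have I : ∀ f : Euc d × Euc d → ℝ, Continuous f →
      IntegrableOn f (b ×ˢ G) (volume.prod volume) :=
    fun f hf => (cont_integrableOn_ball_prod hf y δ).mono_set hsub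
  have I1 := I (fun z => |u z.1| ^ p) (hcU.comp continuous_fst)
  have I3 := I (fun _ => l ^ p) (by fun_prop)
  have I4 := I _ hcF
  have key : ∫ z in b ×ˢ G, |u z.1| ^ p ∂(volume.prod volume) ≤
      ∫ z in b ×ˢ G, (2 ^ p * (|u z.1 - u z.2| ^ p + l ^ p)) ∂(volume.prod volume) := by
    refine setIntegral_mono_on I1 ((I4.add I3).const_mul _) (mb.prod mG) fun z hz => ?_
    have h1 : |u z.2| ≤ l := not_lt.1 hz.2.2
    have h2 : |u z.1| ≤ |u z.1 - u z.2| + l := by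
      have := abs_add_le (u z.1 - u z.2) (u z.2)
      simp only [sub_add_cancel] at this
      linarith
    calc |u z.1| ^ p ≤ (|u z.1 - u z.2| + l) ^ p := by gcongr
      _ ≤ _ := add_rpow_two (abs_nonneg _) hl (by linarith)
  rw [integral_const_mul, integral_add I4 I3, prod_int_fst (f := fun x => |u x| ^ p),
    prod_int_const] at key
  have hP : ∫ z in b ×ˢ G, |u z.1 - u z.2| ^ p ∂(volume.prod volume) ≤
      ∫ z in b ×ˢ b, |u z.1 - u z.2| ^ p ∂(volume.prod volume) :=
    setIntegral_mono_set (cont_integrableOn_ball_prod hcF y δ)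
      (Eventually.of_forall fun z => by positivity) hsub.eventuallyLE
  have hPo := poincare hp u hu y hδ
  rw [← hb] at hPo
  have hGpos : 0 < volume.real G := by linarith
  set D := ∫ x in b, ‖fderiv ℝ u x‖ ^ p with hD
  have hDn : 0 ≤ D := integral_nonneg fun x => by positivity
  have h2p : (0 : ℝ) < 2 ^ p := by positivity
  have hK : 0 ≤ (2 * δ) ^ p * 2 ^ d * D := by positivity
  have : volume.real G * ∫ x in b, |u x| ^ p ≤ volume.real G * (2 ^ p * l ^ p * volume.real b +
      2 ^ p * (2 * (2 * δ) ^ p * 2 ^ d) * D) := by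
    calc _ ≤ _ := key
      _ ≤ 2 ^ p * ((2 * δ) ^ p * 2 ^ d * volume.real b * D
          + volume.real b * volume.real G * l ^ p) := by gcongr; linarith
      _ ≤ 2 ^ p * ((2 * δ) ^ p * 2 ^ d * (2 * volume.real G) * D
          + volume.real b * volume.real G * l ^ p) := by gcongr; linarith
      _ = _ := by ring
  exact le_of_mul_le_mul_left this hGpos

lemma small_scale_bound {d : ℕ} {p : ℝ} (hp : 1 ≤ p) (u : Euc d → ℝ) (hu : ContDiff ℝ 1 u)
    (x₀ : Euc d) {r δ l : ℝ} (hδ : 0 < δ) (hl : 0 ≤ l)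
    (hh : ∀ y ∈ Metric.ball x₀ r,
      volume.real (Metric.ball y δ ∩ {x | l < |u x|}) ≤ volume.real (Metric.ball y δ) / 2) :
    ∫ x in Metric.ball x₀ (r - δ), |u x| ^ p ≤ 2 ^ p * l ^ p * volume.real (Metric.ball x₀ r) +
      2 ^ p * (2 * (2 * δ) ^ p * 2 ^ d) *
        ∫ x in Metric.ball x₀ (r + δ), ‖fderiv ℝ u x‖ ^ p := by
  have hcu : Continuous u := hu.continuous
  have hcd : Continuous (fderiv ℝ u) := hu.continuous_fderiv one_ne_zero
  have hcU : Continuous fun x => |u x| ^ p :=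
    hcu.abs.rpow_const (fun _ => Or.inr (by linarith))
  set K := 2 ^ p * (2 * (2 * δ) ^ p * 2 ^ d) with hKdef
  have hK : 0 ≤ K := by positivity
  have hcD : Continuous fun x => ‖fderiv ℝ u x‖ ^ p :=
    hcd.norm.rpow_const (fun _ => Or.inr (by linarith))
  have hcDK : Continuous fun x => K * ‖fderiv ℝ u x‖ ^ p := by fun_prop
  have hI : ∀ y s, 0 ≤ ∫ x in Metric.ball y s, ‖fderiv ℝ u x‖ ^ p :=
    fun y s => integral_nonneg fun x => by positivity
  have conv1 : ∀ y s, ENNReal.ofReal (∫ x in Metric.ball y s, |u x| ^ p) =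
      ∫⁻ x in Metric.ball y s, ENNReal.ofReal (|u x| ^ p) := fun y s =>
    ofReal_integral_eq_lintegral_ofReal (cont_integrableOn_ball hcU y s)
      (Eventually.of_forall fun z => by positivity)
  have conv2 : ∀ y s, ENNReal.ofReal (K * ∫ x in Metric.ball y s, ‖fderiv ℝ u x‖ ^ p) =
      ∫⁻ x in Metric.ball y s, ENNReal.ofReal (K * ‖fderiv ℝ u x‖ ^ p) := fun y s => by
    rw [← integral_const_mul]
    exact ofReal_integral_eq_lintegral_ofReal (cont_integrableOn_ball hcDK y s)
      (Eventually.of_forall fun z => by positivity)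
  have main := ball_averaging x₀ (r := r) hδ (fun x => ENNReal.ofReal (|u x| ^ p))
    (fun x => ENNReal.ofReal (K * ‖fderiv ℝ u x‖ ^ p)) hcU.measurable.ennreal_ofReal
    hcDK.measurable.ennreal_ofReal (ENNReal.ofReal (2 ^ p * l ^ p)) (by
      intro y hy
      rw [← conv1, ← conv2, ← Measure.addHaar_ball_center volume y,
        ← ofReal_measureReal (measure_ball_lt_top.ne : volume (Metric.ball y δ) ≠ ⊤),
        ← ENNReal.ofReal_mul (by positivity), ← ENNReal.ofReal_add (by positivity)
          (mul_nonneg hK (hI _ _))]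
      exact ENNReal.ofReal_le_ofReal (half_bound hp u hu y hδ hl (hh y hy)))
  rw [← conv1, ← conv2,
        ← ofReal_measureReal (measure_ball_lt_top.ne : volume (Metric.ball x₀ r) ≠ ⊤),
        ← ENNReal.ofReal_mul (by positivity), ← ENNReal.ofReal_add (by positivity)
          (mul_nonneg hK (hI _ _))] at main
  exact (ENNReal.ofReal_le_ofReal_iff (add_nonneg (by positivity) (mul_nonneg hK (hI _ _)))).1 main

lemma smoothTransition_deriv_bdd : ∃ S : ℝ, 0 < S ∧ ∀ s : ℝ, 0 ≤ s →
    |deriv Real.smoothTransition s| ≤ S := by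
  have hc : Continuous (deriv Real.smoothTransition) :=
    (Real.smoothTransition.contDiff (n := 1)).continuous_deriv le_rfl
  obtain ⟨S, hS⟩ := (isCompact_Icc (a := (0 : ℝ)) (b := 1)).exists_bound_of_continuousOn
    hc.continuousOn
  refine ⟨max S 1, by positivity, fun s hs => ?_⟩
  rcases le_or_gt s 1 with h | h
  · exact (hS s ⟨hs, h⟩).trans (le_max_left _ _)
  · have : Real.smoothTransition =ᶠ[𝓝 s] fun _ => 1 := by
      filter_upwards [lt_mem_nhds h] with t ht
      exact Real.smoothTransition.one_of_one_le ht.le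
    rw [this.deriv_eq]
    simp

lemma cutoff_exists (d : ℕ) {p : ℝ} (hp : 1 < p) : ∃ K : ℝ, 0 < K ∧ ∀ (x₀ : Euc d) (r r' : ℝ),
    0 < r → r < r' → ∃ ζ : Euc d → ℝ, ContDiff ℝ (⊤ : ℕ∞) ζ ∧ (∀ x, 0 ≤ ζ x) ∧ (∀ x, ζ x ≤ 1) ∧
      (∀ x ∈ Metric.ball x₀ r, ζ x = 1) ∧ (∀ x, x ∉ Metric.ball x₀ r' → ζ x = 0) ∧
      ∀ x, ‖fderiv ℝ ζ x‖ ^ p ≤ K / (r' - r) ^ p * ζ x ^ (p - 1) := by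
  obtain ⟨S, hS0, hS⟩ := smoothTransition_deriv_bdd
  set N := ⌈p⌉₊ with hN
  have hNp : p ≤ N := Nat.le_ceil p
  have hN2 : 1 < N := by
    have : (1 : ℝ) < N := by linarith
    exact_mod_cast this
  refine ⟨(N * S * 2) ^ p, by positivity, fun x₀ r r' hr hrr => ?_⟩
  set f : Euc d → ℝ := fun x => (r' ^ 2 - ‖x - x₀‖ ^ 2) / (r' ^ 2 - r ^ 2) with hf
  have hden : 0 < r' ^ 2 - r ^ 2 := by nlinarith
  have hfs : ContDiff ℝ (⊤ : ℕ∞) f := by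
    apply ContDiff.div_const
    exact contDiff_const.sub ((contDiff_id.sub contDiff_const).norm_sq ℝ)
  set η : Euc d → ℝ := fun x => Real.smoothTransition (f x) with hη
  have hηs : ContDiff ℝ (⊤ : ℕ∞) η := Real.smoothTransition.contDiff.comp hfs
  have hη0 : ∀ x, 0 ≤ η x := fun x => Real.smoothTransition.nonneg _
  have hη1 : ∀ x, η x ≤ 1 := fun x => Real.smoothTransition.le_one _
  refine ⟨fun x => η x ^ N, hηs.pow N, fun x => pow_nonneg (hη0 x) N,
    fun x => pow_le_one₀ (hη0 x) (hη1 x), ?_, ?_, ?_⟩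
  · intro x hx
    have : η x = 1 := by
      apply Real.smoothTransition.one_of_one_le
      rw [Metric.mem_ball, dist_eq_norm] at hx
      rw [hf, le_div_iff₀ hden]
      have : ‖x - x₀‖ ^ 2 ≤ r ^ 2 := by gcongr
      linarith
    simp [this]
  · intro x hx
    have : η x = 0 := by
      apply Real.smoothTransition.zero_of_nonpos
      rw [Metric.mem_ball, dist_eq_norm, not_lt] at hx
      apply div_nonpos_of_nonpos_of_nonneg _ hden.le
      have : r' ^ 2 ≤ ‖x - x₀‖ ^ 2 := by
        have : 0 ≤ r' := by linarith
        gcongr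
      linarith
    simp [this]; omega
  · intro x
    have hηd : DifferentiableAt ℝ η x := (hηs.differentiable (by simp)) x
    have e1 : fderiv ℝ (fun x => η x ^ N) x = (N * η x ^ (N - 1)) • fderiv ℝ η x := by
      have := hηd.hasFDerivAt.pow N
      rw [this.fderiv]
      simp
    rw [e1, norm_smul]
    rcases (hη0 x).eq_or_lt with h0 | h0
    · have h1 : (N : ℝ) * η x ^ (N - 1) = 0 := by
        rw [← h0, zero_pow (by omega)]; simp
      rw [h1]
      simp only [norm_zero, zero_mul]
      rw [Real.zero_rpow (by linarith)]
      have : 0 < r' - r := by linarith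
      have := hη0 x
      positivity
    · have hfx : 0 < f x := by
        by_contra h
        exact h0.ne' (Real.smoothTransition.zero_of_nonpos (not_lt.1 h))
      have hxr : ‖x - x₀‖ < r' := by
        have : 0 < r' ^ 2 - ‖x - x₀‖ ^ 2 := by
          by_contra h
          exact absurd hfx (not_lt.2 (div_nonpos_of_nonpos_of_nonneg (not_lt.1 h) hden.le))
        exact lt_of_pow_lt_pow_left₀ 2 (by linarith) (by linarith)
      have hfd : HasFDerivAt f ((r' ^ 2 - r ^ 2)⁻¹ • (-(2 • innerSL ℝ (x - x₀)) : Euc d →L[ℝ] ℝ)) x := by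
        have h1 : HasFDerivAt (fun x : Euc d => ‖x - x₀‖ ^ 2) (2 • innerSL ℝ (x - x₀) : Euc d →L[ℝ] ℝ) x := by
          have := ((hasFDerivAt_id x).sub_const x₀).norm_sq
          simpa using this
        have := (h1.const_sub (r' ^ 2)).mul_const (r' ^ 2 - r ^ 2)⁻¹
        simpa [hf, div_eq_mul_inv] using this
      have hst : HasDerivAt Real.smoothTransition (deriv Real.smoothTransition (f x)) (f x) :=
        ((Real.smoothTransition.contDiff (n := 1)).differentiable one_ne_zero _).hasDerivAt
      have hηf := (hst.comp_hasFDerivAt x hfd).fderiv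
      have hηn : ‖fderiv ℝ η x‖ ≤ S * (2 / (r' - r)) := by
        have : fderiv ℝ η x = fderiv ℝ (Real.smoothTransition ∘ f) x := rfl
        rw [this, hηf, norm_smul, norm_smul, norm_neg, Real.norm_eq_abs, Real.norm_eq_abs]
        have h2 : ‖2 • innerSL ℝ (x - x₀)‖ ≤ 2 * r' := by
          rw [← Nat.cast_smul_eq_nsmul ℝ, norm_smul, innerSL_apply_norm]
          simp; linarith
        have h3 : |(r' ^ 2 - r ^ 2)⁻¹| * ‖2 • innerSL ℝ (x - x₀)‖ ≤ 2 / (r' - r) := by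
          rw [abs_of_pos (by positivity), inv_mul_le_iff₀ hden]
          refine h2.trans ?_
          rw [mul_div_assoc', le_div_iff₀ (by linarith)]
          nlinarith
        exact mul_le_mul (hS _ hfx.le) h3 (by positivity) hS0.le
      have hrpos : 0 < r' - r := by linarith
      rw [Real.norm_eq_abs, abs_of_nonneg (by positivity)]
      calc (N * η x ^ (N - 1) * ‖fderiv ℝ η x‖) ^ p
          ≤ (N * η x ^ (N - 1) * (S * (2 / (r' - r)))) ^ p := by gcongr
        _ = (N * S * 2 / (r' - r) * η x ^ (N - 1)) ^ p := by congr 1; ring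
        _ = (N * S * 2) ^ p / (r' - r) ^ p * (η x ^ (N - 1)) ^ p := by
            rw [Real.mul_rpow (by positivity) (by positivity), Real.div_rpow (by positivity) hrpos.le]
        _ ≤ (N * S * 2) ^ p / (r' - r) ^ p * (η x ^ N) ^ (p - 1) := by
            gcongr
            rw [← Real.rpow_natCast, ← Real.rpow_natCast, ← Real.rpow_mul h0.le,
              ← Real.rpow_mul h0.le]
            apply Real.rpow_le_rpow_of_exponent_ge h0 (hη1 x)
            rw [Nat.cast_sub hN2.le]
            push_cast
            nlinarith

lemma norm_gradient_eq {d : ℕ} (u : Euc d → ℝ) (x : Euc d) : ‖gradient u x‖ = ‖fderiv ℝ u x‖ := by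
  simp [gradient]

section basic
variable {d : ℕ} {Ω : Set (Euc d)} {V : Euc d → ℝ} {p : ℝ}

lemma integrable_pot_mul (hV : LocBddPotential Ω V) {f : Euc d → ℝ} (hf : Continuous f)
    (hfc : HasCompactSupport f) (hfs : tsupport f ⊆ Ω) : Integrable (fun x => V x * f x) := by
  obtain ⟨C, hC⟩ := hV.2 (tsupport f) hfs hfc
  refine ((hf.integrable_of_hasCompactSupport hfc).norm.const_mul C).mono'
    (hV.1.mul hf.measurable).aestronglyMeasurable (Eventually.of_forall fun x => ?_)
  by_cases hx : x ∈ tsupport f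
  · rw [norm_mul]
    gcongr
    exact hC x hx
  · simp [image_eq_zero_of_notMem_tsupport hx]

lemma abs_rpow_cont {u : Euc d → ℝ} (hp : 0 < p) (hu : Continuous u) :
    Continuous fun x => |u x| ^ p := hu.abs.rpow_const (fun _ => Or.inr hp.le)

lemma abs_rpow_cs {u : Euc d → ℝ} (hp : 0 < p) (hu : HasCompactSupport u) :
    HasCompactSupport fun x => |u x| ^ p :=
  hu.comp_left (g := fun t => |t| ^ p) (by simp [Real.zero_rpow hp.ne'])

lemma abs_rpow_ts {u : Euc d → ℝ} (hp : 0 < p) :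
    (tsupport fun x => |u x| ^ p) ⊆ tsupport u :=
  tsupport_comp_subset (g := fun t => |t| ^ p) (by simp [Real.zero_rpow hp.ne']) u

lemma IsTestFun.int_grad (hp : 0 < p) {u : Euc d → ℝ} (hu : IsTestFun Ω u) :
    Integrable fun x => ‖fderiv ℝ u x‖ ^ p := by
  have hc : Continuous (fderiv ℝ u) := hu.1.continuous_fderiv (by simp)
  apply (hc.norm.rpow_const (fun _ => Or.inr hp.le)).integrable_of_hasCompactSupport
  exact (hu.2.1.fderiv ℝ).comp_left (g := fun t => ‖t‖ ^ p) (by simp [Real.zero_rpow hp.ne'])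

lemma IsTestFun.int_pot (hp : 0 < p) (hV : LocBddPotential Ω V) {u : Euc d → ℝ}
    (hu : IsTestFun Ω u) : Integrable fun x => V x * |u x| ^ p :=
  integrable_pot_mul hV (abs_rpow_cont hp hu.1.continuous) (abs_rpow_cs hp hu.2.1)
    ((abs_rpow_ts hp).trans hu.2.2)

lemma IsTestFun.int_abs (hp : 0 < p) {u : Euc d → ℝ}
    (hu : IsTestFun Ω u) : Integrable fun x => |u x| ^ p :=
  (abs_rpow_cont hp hu.1.continuous).integrable_of_hasCompactSupport (abs_rpow_cs hp hu.2.1)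

lemma energyQ_eq (hp : 0 < p) {u : Euc d → ℝ} (hu : IsTestFun Ω u) :
    energyQ Ω V p u = ∫ x, (‖fderiv ℝ u x‖ ^ p + V x * |u x| ^ p) := by
  unfold energyQ
  simp_rw [norm_gradient_eq]
  apply setIntegral_eq_integral_of_forall_compl_eq_zero
  intro x hx
  have hx' : x ∉ tsupport u := fun h => hx (hu.2.2 h)
  have h1 : u x = 0 := image_eq_zero_of_notMem_tsupport hx'
  have h2 : fderiv ℝ u x = 0 := by
    by_contra h
    exact hx' (support_fderiv_subset ℝ h)
  simp [h1, h2, Real.zero_rpow hp.ne']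

lemma conv_ineq (hp : 1 < p) {ζ A b Z k : ℝ} (hk : 0 ≤ k) (hζ0 : 0 ≤ ζ)
    (hζ1 : ζ ≤ 1) (hA : 0 ≤ A) (hb : 0 ≤ b)
    (hZ : 0 ≤ Z) (h : Z ^ p ≤ k * ζ ^ (p - 1)) :
    ((1 - ζ) * A + b * Z) ^ p ≤ (1 - ζ) * A ^ p + b ^ p * k := by
  rcases hζ0.eq_or_lt with h0 | h0
  · rw [← h0, Real.zero_rpow (by linarith), mul_zero] at h
    have hZ0 : Z = 0 := by
      have : Z ^ p = 0 := le_antisymm h (Real.rpow_nonneg hZ p)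
      exact (Real.rpow_eq_zero hZ (by linarith)).1 this
    rw [← h0, hZ0]
    have : 0 ≤ b ^ p * k := by positivity
    simp only [mul_zero, add_zero, sub_zero, one_mul]
    linarith
  · have := (convexOn_rpow hp.le).2 (Set.mem_Ici.2 hA) (Set.mem_Ici.2 (by positivity : 0 ≤ b * Z / ζ))
      (by linarith : 0 ≤ 1 - ζ) hζ0 (by ring)
    simp only [smul_eq_mul] at this
    rw [mul_div_cancel₀ _ h0.ne'] at this
    refine this.trans ?_
    refine add_le_add le_rfl ?_
    rw [Real.div_rpow (by positivity) hζ0, Real.mul_rpow hb hZ]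
    rw [Real.rpow_sub_one h0.ne'] at h
    have hzp : 0 < ζ ^ p := Real.rpow_pos_of_pos h0 p
    rw [mul_div_assoc', div_le_iff₀ hzp]
    calc ζ * (b ^ p * Z ^ p) ≤ ζ * (b ^ p * (k * (ζ ^ p / ζ))) := by
          have := Real.rpow_nonneg hb p
          gcongr
      _ = b ^ p * k * ζ ^ p := by field_simp

lemma rpow_abs_mul_bound {V M a w : ℝ} (hp : 0 < p) (hV : |V| ≤ M) (hw : |w| ≤ |a|) :
    V * |w| ^ p ≤ V * |a| ^ p + M * |a| ^ p := by
  have h1 : |w| ^ p ≤ |a| ^ p := by gcongr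
  have h2 : 0 ≤ |w| ^ p := by positivity
  have := abs_le.1 hV
  nlinarith

end basic

lemma caccioppoli (d : ℕ) {p : ℝ} (hp : 1 < p) : ∃ K : ℝ, 0 < K ∧ ∀ (Ω : Set (Euc d))
    (V : Euc d → ℝ), LocBddPotential Ω V → (∀ u, IsTestFun Ω u → 0 ≤ energyQ Ω V p u) →
    ∀ (x₀ : Euc d) (r r' M : ℝ), 0 < r → r < r' → 0 ≤ M → (∀ x ∈ Metric.ball x₀ r', |V x| ≤ M) →
    ∀ u, IsTestFun Ω u → ∫ x in Metric.ball x₀ r, ‖fderiv ℝ u x‖ ^ p ≤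
      energyQ Ω V p u + (M + K / (r' - r) ^ p) * ∫ x in Metric.ball x₀ r', |u x| ^ p := by
  obtain ⟨K, hK0, hK⟩ := cutoff_exists d hp
  have hp0 : 0 < p := by linarith
  refine ⟨K, hK0, fun Ω V hV hQ x₀ r r' M hr hrr hM hVM u hu => ?_⟩
  obtain ⟨ζ, hζs, hζ0, hζ1, hζr, hζr', hζd⟩ := hK x₀ r r' hr hrr
  set k : ℝ := K / (r' - r) ^ p with hk
  have hrpos : 0 < r' - r := by linarith
  have hk0 : 0 ≤ k := by positivity
  set w : Euc d → ℝ := fun x => (1 - ζ x) * u x with hw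
  have hwt : IsTestFun Ω w := by
    refine ⟨(contDiff_const.sub hζs).mul hu.1, hu.2.1.mul_left, ?_⟩
    exact (tsupport_mul_subset_right (f := fun x => 1 - ζ x)).trans hu.2.2
  have hQw := hQ w hwt
  rw [energyQ_eq hp0 hwt] at hQw
  rw [energyQ_eq hp0 hu]
  have hiw := (hwt.int_grad hp0).add (hwt.int_pot hp0 hV)
  have hiu := (hu.int_grad hp0).add (hu.int_pot hp0 hV)
  have hi1 : Integrable ((Metric.ball x₀ r).indicator (fun x => ‖fderiv ℝ u x‖ ^ p)) :=
    (hu.int_grad hp0).indicator measurableSet_ball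
  have hi2 : Integrable ((Metric.ball x₀ r').indicator (fun x => |u x| ^ p)) :=
    (hu.int_abs hp0).indicator measurableSet_ball
  rw [← integral_indicator measurableSet_ball, ← integral_indicator measurableSet_ball]
  have hpt : ∀ x, (‖fderiv ℝ w x‖ ^ p + V x * |w x| ^ p) +
      (Metric.ball x₀ r).indicator (fun x => ‖fderiv ℝ u x‖ ^ p) x ≤
      (‖fderiv ℝ u x‖ ^ p + V x * |u x| ^ p) +
      (M + k) * (Metric.ball x₀ r').indicator (fun x => |u x| ^ p) x := by
    intro x
    have hud : DifferentiableAt ℝ u x := hu.1.differentiable (by simp) x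
    have hzd : DifferentiableAt ℝ ζ x := hζs.differentiable (by simp) x
    have hfw : fderiv ℝ w x = (1 - ζ x) • fderiv ℝ u x + u x • (-fderiv ℝ ζ x) := by
      have := (hzd.hasFDerivAt.const_sub 1).mul hud.hasFDerivAt
      exact this.fderiv
    have hnw : ‖fderiv ℝ w x‖ ≤ (1 - ζ x) * ‖fderiv ℝ u x‖ + |u x| * ‖fderiv ℝ ζ x‖ := by
      rw [hfw]
      refine (norm_add_le _ _).trans ?_
      rw [norm_smul, norm_smul, norm_neg, Real.norm_eq_abs, Real.norm_eq_abs,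
        abs_of_nonneg (by linarith [hζ1 x] : 0 ≤ 1 - ζ x)]
    have hnwp : ‖fderiv ℝ w x‖ ^ p ≤ ((1 - ζ x) * ‖fderiv ℝ u x‖ + |u x| * ‖fderiv ℝ ζ x‖) ^ p := by
      gcongr
    have h1 : (Metric.ball x₀ r).indicator (fun x => ‖fderiv ℝ u x‖ ^ p) x ≤
        ζ x * ‖fderiv ℝ u x‖ ^ p := by
      by_cases hx : x ∈ Metric.ball x₀ r
      · rw [Set.indicator_of_mem hx, hζr x hx, one_mul]
      · rw [Set.indicator_of_notMem hx]
        have := hζ0 x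
        positivity
    have hwu : |w x| ≤ |u x| := by
      rw [hw, abs_mul, abs_of_nonneg (by linarith [hζ1 x] : 0 ≤ 1 - ζ x)]
      have := abs_nonneg (u x)
      have := hζ0 x
      nlinarith
    by_cases hx : x ∈ Metric.ball x₀ r'
    · rw [Set.indicator_of_mem hx]
      have h2 := conv_ineq hp hk0 (hζ0 x) (hζ1 x) (norm_nonneg (fderiv ℝ u x)) (abs_nonneg (u x))
        (norm_nonneg (fderiv ℝ ζ x)) (hζd x)
      have h3 := rpow_abs_mul_bound hp0 (hVM x hx) hwu
      linarith
    · rw [Set.indicator_of_notMem hx]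
      have hz : ζ x = 0 := hζr' x hx
      have h4 := hζd x
      rw [hz, Real.zero_rpow (by linarith), mul_zero] at h4
      have h2 := conv_ineq hp le_rfl (hζ0 x) (hζ1 x) (norm_nonneg (fderiv ℝ u x)) (abs_nonneg (u x))
        (norm_nonneg (fderiv ℝ ζ x)) (by simpa using h4)
      have h5 : w x = u x := by simp [hw, hz]
      rw [h5]
      linarith
  have := integral_mono (hiw.add hi1) (hiu.add (hi2.const_mul (M + k))) hpt
  simp only [Pi.add_apply] at this
  rw [integral_add (by exact hiw) hi1, integral_add (by exact hiu) (hi2.const_mul _), integral_const_mul] at this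
  linarith

lemma holder_two {p a b A B : ℝ} (hp : 1 < p) (ha : 0 ≤ a) (hb : 0 ≤ b) (hA : 0 ≤ A) (hB : 0 ≤ B) :
    (a ^ (p - 1) * A + b ^ (p - 1) * B) ^ p ≤ (a ^ p + b ^ p) ^ (p - 1) * (A ^ p + B ^ p) := by
  have hp0 : 0 < p := by linarith
  have hpq : p.HolderConjugate (p / (p - 1)) := Real.HolderConjugate.conjExponent hp
  have := Real.inner_le_Lp_mul_Lq (Finset.univ : Finset (Fin 2)) ![A, B] ![a ^ (p - 1), b ^ (p - 1)] hpq
  simp only [Fin.sum_univ_two, Matrix.cons_val_zero, Matrix.cons_val_one] at this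
  rw [abs_of_nonneg hA, abs_of_nonneg hB, abs_of_nonneg (Real.rpow_nonneg ha _),
    abs_of_nonneg (Real.rpow_nonneg hb _), ← Real.rpow_mul ha, ← Real.rpow_mul hb] at this
  have e : (p - 1) * (p / (p - 1)) = p := by
    have : p - 1 ≠ 0 := by linarith
    field_simp
  rw [e] at this
  have ha' := Real.rpow_nonneg ha (p - 1)
  have hb' := Real.rpow_nonneg hb (p - 1)
  calc (a ^ (p - 1) * A + b ^ (p - 1) * B) ^ p
      ≤ ((A ^ p + B ^ p) ^ (1 / p) * (a ^ p + b ^ p) ^ (1 / (p / (p - 1)))) ^ p := by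
        apply Real.rpow_le_rpow (by positivity) (by linarith) hp0.le
    _ = (a ^ p + b ^ p) ^ (p - 1) * (A ^ p + B ^ p) := by
        rw [Real.mul_rpow (by positivity) (by positivity), ← Real.rpow_mul (by positivity),
          ← Real.rpow_mul (by positivity)]
        have h1 : 1 / p * p = 1 := by field_simp
        have h2 : 1 / (p / (p - 1)) * p = p - 1 := by
          have : p - 1 ≠ 0 := by linarith
          field_simp
        rw [h1, h2, Real.rpow_one, mul_comm]

lemma bern {p α : ℝ} (hp : 1 < p) (h0 : 0 ≤ α) (h1 : α ≤ 1) :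
    α ^ (p - 1) + min 1 (p - 1) * (α ^ (p - 1) * (1 - α)) ≤ 1 := by
  have hc0 : 0 ≤ min 1 (p - 1) := le_min zero_le_one (by linarith)
  have ha1 : α ^ (p - 1) ≤ 1 := Real.rpow_le_one h0 h1 (by linarith)
  have ha0 : 0 ≤ α ^ (p - 1) := Real.rpow_nonneg h0 _
  have key : min 1 (p - 1) * (1 - α) ≤ 1 - α ^ (p - 1) := by
    rcases le_total 1 (p - 1) with h | h
    · rw [min_eq_left h]
      have : α ^ (p - 1) ≤ α := by
        calc α ^ (p - 1) ≤ α ^ (1 : ℝ) := by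
              rcases h0.eq_or_lt with h0 | h0
              · rw [← h0, Real.zero_rpow (by linarith), Real.zero_rpow (by linarith)]
              · exact Real.rpow_le_rpow_of_exponent_ge h0 h1 h
          _ = α := Real.rpow_one _
      linarith
    · rw [min_eq_right h]
      have := rpow_one_add_le_one_add_mul_self (s := α - 1) (by linarith) (by linarith : 0 ≤ p - 1) h
      rw [add_sub_cancel] at this
      linarith
  have : α ^ (p - 1) * (min 1 (p - 1) * (1 - α)) ≤ min 1 (p - 1) * (1 - α) := by
    have : 0 ≤ min 1 (p - 1) * (1 - α) := mul_nonneg hc0 (by linarith)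
    nlinarith
  linarith

/-- Regularised absolute value. -/
def Ureg {d : ℕ} (u : Euc d → ℝ) (κ : ℝ) (x : Euc d) : ℝ := √(u x ^ 2 + κ ^ 2)

/-- Logarithm of the regularised function. -/
def vlog {d : ℕ} (p ε : ℝ) (u : Euc d → ℝ) (κ : ℝ) (x : Euc d) : ℝ :=
  1 / p * Real.log (1 + Ureg u κ x ^ p / ε ^ p)

/-- The modified function. -/
def Wreg {d : ℕ} (p ε : ℝ) (u ζ : Euc d → ℝ) (κ : ℝ) (x : Euc d) : ℝ :=
  (Ureg u κ x ^ p + ε ^ p * ζ x) ^ (1 / p)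

section
variable {d : ℕ} {u ζ : Euc d → ℝ} {κ p ε : ℝ} {x : Euc d}

lemma Ureg_pos (hκ : 0 < κ) : 0 < Ureg u κ x := Real.sqrt_pos.2 (by positivity)

lemma Ureg_ge (hκ : 0 < κ) : κ ≤ Ureg u κ x := by
  apply Real.le_sqrt_of_sq_le
  have := sq_nonneg (u x)
  linarith

lemma abs_le_Ureg : |u x| ≤ Ureg u κ x := by
  apply Real.le_sqrt_of_sq_le
  have := sq_nonneg κ
  rw [sq_abs]
  linarith

lemma Ureg_le (hκ : 0 < κ) : Ureg u κ x ≤ |u x| + κ := by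
  apply Real.sqrt_le_iff.2
  refine ⟨by positivity, ?_⟩
  have := abs_nonneg (u x)
  nlinarith [sq_abs (u x)]

lemma Ureg_smooth (hκ : 0 < κ) (hu : ContDiff ℝ (⊤ : ℕ∞) u) : ContDiff ℝ (⊤ : ℕ∞) (Ureg u κ) :=
  ((hu.pow 2).add contDiff_const).sqrt (fun x => by positivity)

lemma Ureg_fderiv (hκ : 0 < κ) (hu : ContDiff ℝ (⊤ : ℕ∞) u) :
    ‖fderiv ℝ (Ureg u κ) x‖ ≤ ‖fderiv ℝ u x‖ := by
  have hud : HasFDerivAt u (fderiv ℝ u x) x := (hu.differentiable (by simp) x).hasFDerivAt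
  have h1 := ((hud.pow 2).add_const (κ ^ 2)).sqrt (by positivity)
  have h2 : fderiv ℝ (Ureg u κ) x = _ := h1.fderiv
  rw [h2, norm_smul, norm_smul]
  have hU : 0 < √(u x ^ 2 + κ ^ 2) := Ureg_pos hκ
  have hU2 : |u x| ≤ √(u x ^ 2 + κ ^ 2) := abs_le_Ureg
  have : ‖1 / (2 * √(u x ^ 2 + κ ^ 2))‖ * ‖(2 • u x ^ (2 - 1) : ℝ)‖ ≤ 1 := by
    rw [Real.norm_eq_abs, abs_of_pos (by positivity)]
    simp only [Nat.add_one_sub_one, pow_one, nsmul_eq_mul, Nat.cast_ofNat, norm_mul,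
      Real.norm_ofNat, Real.norm_eq_abs]
    rw [one_div_mul_eq_div, div_le_one (by positivity)]
    linarith
  rw [← mul_assoc]
  calc _ ≤ 1 * ‖fderiv ℝ u x‖ := by gcongr
    _ = _ := one_mul _

lemma Wreg_base_pos (hκ : 0 < κ) (hε : 0 < ε) (hζ : ∀ x, 0 ≤ ζ x) :
    0 < Ureg u κ x ^ p + ε ^ p * ζ x := by
  have := Ureg_pos (u := u) (x := x) hκ
  have := hζ x
  positivity

lemma Wreg_smooth (hκ : 0 < κ) (hε : 0 < ε) (hu : ContDiff ℝ (⊤ : ℕ∞) u)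
    (hζs : ContDiff ℝ (⊤ : ℕ∞) ζ) (hζ : ∀ x, 0 ≤ ζ x) :
    ContDiff ℝ (⊤ : ℕ∞) (Wreg p ε u ζ κ) := by
  apply ContDiff.rpow_const_of_ne
  · exact ((Ureg_smooth hκ hu).rpow_const_of_ne (fun x => (Ureg_pos hκ).ne')).add
      (contDiff_const.mul hζs)
  · exact fun x => (Wreg_base_pos hκ hε hζ).ne'

lemma vlog_smooth (hκ : 0 < κ) (hε : 0 < ε) (hu : ContDiff ℝ (⊤ : ℕ∞) u) :
    ContDiff ℝ (⊤ : ℕ∞) (vlog p ε u κ) := by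
  apply contDiff_const.mul
  apply ContDiff.log
  · exact contDiff_const.add (((Ureg_smooth hκ hu).rpow_const_of_ne
      (fun x => (Ureg_pos hκ).ne')).div_const _)
  · intro x
    have := Ureg_pos (u := u) (x := x) hκ
    positivity

lemma vlog_fderiv (hp : 1 < p) (hκ : 0 < κ) (hε : 0 < ε) (hu : ContDiff ℝ (⊤ : ℕ∞) u) :
    fderiv ℝ (vlog p ε u κ) x =
      (Ureg u κ x ^ (p - 1) / (Ureg u κ x ^ p + ε ^ p)) • fderiv ℝ (Ureg u κ) x := by
  have hU := Ureg_pos (u := u) (x := x) hκ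
  have hUd : HasFDerivAt (Ureg u κ) (fderiv ℝ (Ureg u κ) x) x :=
    ((Ureg_smooth hκ hu).differentiable (by simp) x).hasFDerivAt
  have h1 := ((((hUd.rpow_const (p := p) (Or.inl hU.ne')).mul_const (ε ^ p)⁻¹).const_add 1).log
    (by positivity)).const_mul (1 / p)
  have h2 : vlog p ε u κ = fun y => 1 / p * Real.log (1 + Ureg u κ y ^ p * (ε ^ p)⁻¹) := by
    funext y
    simp only [vlog, div_eq_mul_inv]
  rw [h2, h1.fderiv]
  simp only [smul_smul]
  congr 1
  have : 0 < ε ^ p := by positivity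
  have : 0 < Ureg u κ x ^ p := by positivity
  field_simp
  ring

lemma Wreg_fderiv (hp : 1 < p) (hκ : 0 < κ) (hε : 0 < ε) (hu : ContDiff ℝ (⊤ : ℕ∞) u)
    (hζs : ContDiff ℝ (⊤ : ℕ∞) ζ) (hζ : ∀ x, 0 ≤ ζ x) :
    fderiv ℝ (Wreg p ε u ζ κ) x = ((Ureg u κ x ^ p + ε ^ p * ζ x) ^ (1 / p - 1)) •
      (Ureg u κ x ^ (p - 1) • fderiv ℝ (Ureg u κ) x + (ε ^ p / p) • fderiv ℝ ζ x) := by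
  have hU := Ureg_pos (u := u) (x := x) hκ
  have hUd : HasFDerivAt (Ureg u κ) (fderiv ℝ (Ureg u κ) x) x :=
    ((Ureg_smooth hκ hu).differentiable (by simp) x).hasFDerivAt
  have hζd : HasFDerivAt ζ (fderiv ℝ ζ x) x := (hζs.differentiable (by simp) x).hasFDerivAt
  have h1 := ((hUd.rpow_const (p := p) (Or.inl hU.ne')).add (hζd.const_mul (ε ^ p))).rpow_const
    (p := 1 / p) (Or.inl (Wreg_base_pos hκ hε hζ).ne')
  have h2 : fderiv ℝ (Wreg p ε u ζ κ) x = _ := h1.fderiv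
  rw [h2]
  simp only [smul_add, smul_smul]
  simp only [Pi.add_apply]
  congr 2 <;> field_simp

lemma Wreg_grad (hp : 1 < p) (hκ : 0 < κ) (hε : 0 < ε) (hu : ContDiff ℝ (⊤ : ℕ∞) u)
    (hζs : ContDiff ℝ (⊤ : ℕ∞) ζ) (hζ : ∀ x, 0 ≤ ζ x) {k : ℝ} (hk : 0 ≤ k)
    (hζk : ‖fderiv ℝ ζ x‖ ^ p ≤ k * ζ x ^ (p - 1)) :
    ‖fderiv ℝ (Wreg p ε u ζ κ) x‖ ^ p ≤ ‖fderiv ℝ u x‖ ^ p + ε ^ p * k := by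
  have hp0 : 0 < p := by linarith
  have hU := Ureg_pos (u := u) (x := x) hκ
  have hb := Wreg_base_pos (u := u) (p := p) (x := x) hκ hε hζ
  set U := Ureg u κ x
  set S := U ^ p + ε ^ p * ζ x with hS
  have hz := hζ x
  set b := ε * ζ x ^ (1 / p) with hbdef
  have hb0 : 0 ≤ b := by positivity
  have hbp : b ^ p = ε ^ p * ζ x := by
    rw [hbdef, Real.mul_rpow hε.le (by positivity), ← Real.rpow_mul hz]
    rw [one_div, inv_mul_cancel₀ hp0.ne', Real.rpow_one]
  have hDz : ‖fderiv ℝ ζ x‖ ≤ k ^ (1 / p) * ζ x ^ ((p - 1) / p) := by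
    have := Real.rpow_le_rpow (by positivity) hζk (by positivity : 0 ≤ 1 / p)
    rw [← Real.rpow_mul (norm_nonneg _), Real.mul_rpow hk (by positivity), ← Real.rpow_mul hz,
      mul_one_div_cancel hp0.ne', Real.rpow_one, mul_one_div] at this
    exact this
  have hbB : ε ^ p / p * ‖fderiv ℝ ζ x‖ ≤ b ^ (p - 1) * (ε * k ^ (1 / p)) := by
    rw [hbdef, Real.mul_rpow hε.le (by positivity), ← Real.rpow_mul hz]
    have e1 : 1 / p * (p - 1) = (p - 1) / p := by ring
    have e2 : ε ^ p = ε ^ (p - 1) * ε := by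
      rw [← Real.rpow_add_one hε.ne']; ring_nf
    rw [e1]
    calc ε ^ p / p * ‖fderiv ℝ ζ x‖ ≤ ε ^ p * (k ^ (1 / p) * ζ x ^ ((p - 1) / p)) := by
          gcongr
          exact div_le_self (by positivity) hp.le
      _ = _ := by rw [e2]; ring
  have hU' := Ureg_fderiv (x := x) hκ hu
  have hn : ‖fderiv ℝ (Wreg p ε u ζ κ) x‖ ≤ S ^ (1 / p - 1) *
      (U ^ (p - 1) * ‖fderiv ℝ u x‖ + b ^ (p - 1) * (ε * k ^ (1 / p))) := by
    rw [Wreg_fderiv hp hκ hε hu hζs hζ, norm_smul, Real.norm_eq_abs, abs_of_nonneg (by positivity)]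
    gcongr
    refine (norm_add_le _ _).trans ?_
    rw [norm_smul, norm_smul, Real.norm_eq_abs, Real.norm_eq_abs, abs_of_nonneg (by positivity),
      abs_of_nonneg (by positivity)]
    gcongr
  calc ‖fderiv ℝ (Wreg p ε u ζ κ) x‖ ^ p ≤ (S ^ (1 / p - 1) *
      (U ^ (p - 1) * ‖fderiv ℝ u x‖ + b ^ (p - 1) * (ε * k ^ (1 / p)))) ^ p := by gcongr
    _ = S ^ (1 - p) * (U ^ (p - 1) * ‖fderiv ℝ u x‖ + b ^ (p - 1) * (ε * k ^ (1 / p))) ^ p := by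
      rw [Real.mul_rpow (by positivity) (by positivity), ← Real.rpow_mul hb.le]
      congr 2
      field_simp
    _ ≤ S ^ (1 - p) * ((U ^ p + b ^ p) ^ (p - 1) * (‖fderiv ℝ u x‖ ^ p + (ε * k ^ (1 / p)) ^ p)) := by
      gcongr
      exact holder_two hp hU.le hb0 (norm_nonneg _) (by positivity)
    _ = ‖fderiv ℝ u x‖ ^ p + ε ^ p * k := by
      rw [hbp, ← hS, ← mul_assoc, ← Real.rpow_add hb, Real.mul_rpow hε.le (by positivity),
        ← Real.rpow_mul hk, one_div, inv_mul_cancel₀ hp0.ne', Real.rpow_one]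
      simp

lemma Wreg_grad_log (hp : 1 < p) (hκ : 0 < κ) (hε : 0 < ε) (hu : ContDiff ℝ (⊤ : ℕ∞) u)
    (hζs : ContDiff ℝ (⊤ : ℕ∞) ζ) (hζ : ∀ x, 0 ≤ ζ x) (h1 : ζ x = 1) (hd : fderiv ℝ ζ x = 0) :
    ‖fderiv ℝ (Wreg p ε u ζ κ) x‖ ^ p + min 1 (p - 1) * ε ^ p * ‖fderiv ℝ (vlog p ε u κ) x‖ ^ p
      ≤ ‖fderiv ℝ u x‖ ^ p := by
  have hp0 : 0 < p := by linarith
  have hU := Ureg_pos (u := u) (x := x) hκ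
  have hU' := Ureg_fderiv (x := x) hκ hu
  rw [Wreg_fderiv hp hκ hε hu hζs hζ, vlog_fderiv hp hκ hε hu, h1, hd, smul_zero, add_zero, mul_one,
    smul_smul, norm_smul, norm_smul]
  set U := Ureg u κ x
  set A := ‖fderiv ℝ (Ureg u κ) x‖
  set S := U ^ p + ε ^ p with hS
  have hS0 : 0 < S := by positivity
  have hUp : 0 < U ^ p := by positivity
  rw [Real.norm_eq_abs, Real.norm_eq_abs, abs_of_nonneg (by positivity), abs_of_nonneg (by positivity),
    Real.mul_rpow (y := A) (by positivity) (by positivity),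
    Real.mul_rpow (y := A) (by positivity) (by positivity)]
  set α := U ^ p / S with hα
  have e0 : α ^ (p - 1) = (U ^ (p - 1)) ^ p * S ^ (1 - p) := by
    rw [hα, Real.div_rpow hUp.le hS0.le, ← Real.rpow_mul hU.le, ← Real.rpow_mul hU.le, div_eq_mul_inv,
      ← Real.rpow_neg hS0.le]
    ring_nf
  have e1 : (S ^ (1 / p - 1) * U ^ (p - 1)) ^ p = α ^ (p - 1) := by
    rw [e0, Real.mul_rpow (by positivity) (by positivity), ← Real.rpow_mul hS0.le, mul_comm]
    congr 2
    field_simp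
  have e2 : ε ^ p * (U ^ (p - 1) / S) ^ p = α ^ (p - 1) * (1 - α) := by
    have : 1 - α = ε ^ p / S := by
      rw [hα, hS]; field_simp; ring
    rw [this, e0, Real.div_rpow (by positivity) hS0.le]
    have : S ^ (1 - p) = S / S ^ p := by
      rw [Real.rpow_sub hS0, Real.rpow_one]
    rw [this]
    field_simp
  have hb := bern hp (by positivity : 0 ≤ α) ((div_le_one hS0).2 (by
    have : 0 < ε ^ p := by positivity
    linarith))
  calc (S ^ (1 / p - 1) * U ^ (p - 1)) ^ p * A ^ p +
        min 1 (p - 1) * ε ^ p * ((U ^ (p - 1) / S) ^ p * A ^ p)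
      = (α ^ (p - 1) + min 1 (p - 1) * (α ^ (p - 1) * (1 - α))) * A ^ p := by rw [e1, ← e2]; ring
    _ ≤ 1 * A ^ p := by gcongr
    _ ≤ ‖fderiv ℝ u x‖ ^ p := by rw [one_mul]; gcongr
end

section
variable {d : ℕ} {Ω : Set (Euc d)} {V u ζ : Euc d → ℝ} {κ p ε : ℝ} {x : Euc d}

lemma Wreg_zero_off (hp : 1 < p) (hκ : 0 < κ) (hu : u x = 0) (hζ : ζ x = 0) :
    Wreg p ε u ζ κ x - κ = 0 := by
  unfold Wreg Ureg
  rw [hu, hζ]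
  simp only [ne_eq, OfNat.ofNat_ne_zero, not_false_eq_true, zero_pow, zero_add, mul_zero, add_zero]
  rw [Real.sqrt_sq hκ.le, ← Real.rpow_mul hκ.le, mul_one_div_cancel (by linarith), Real.rpow_one,
    sub_self]

lemma Wreg_ge (hp : 1 < p) (hκ : 0 < κ) (hε : 0 < ε) (hζ : ∀ x, 0 ≤ ζ x) :
    κ ≤ Wreg p ε u ζ κ x := by
  have hp0 : 0 < p := by linarith
  have h1 : κ ^ p ≤ Ureg u κ x ^ p + ε ^ p * ζ x := by
    have := Ureg_ge (u := u) (x := x) hκ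
    have h2 : κ ^ p ≤ Ureg u κ x ^ p := by gcongr
    have := hζ x
    have : 0 ≤ ε ^ p * ζ x := by positivity
    linarith
  calc κ = (κ ^ p) ^ (1 / p) := by
        rw [← Real.rpow_mul hκ.le, mul_one_div_cancel hp0.ne', Real.rpow_one]
    _ ≤ _ := by unfold Wreg; gcongr

lemma Wreg_rpow (hp : 1 < p) (hκ : 0 < κ) (hε : 0 < ε) (hζ : ∀ x, 0 ≤ ζ x) :
    Wreg p ε u ζ κ x ^ p = Ureg u κ x ^ p + ε ^ p * ζ x := by
  have hp0 : 0 < p := by linarith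
  unfold Wreg
  rw [← Real.rpow_mul (Wreg_base_pos hκ hε hζ).le, one_div_mul_cancel hp0.ne', Real.rpow_one]

lemma Wreg_test (hp : 1 < p) (hκ : 0 < κ) (hε : 0 < ε) (hu : IsTestFun Ω u)
    (hζs : ContDiff ℝ (⊤ : ℕ∞) ζ) (hζ : ∀ x, 0 ≤ ζ x) {y : Euc d} {r : ℝ}
    (hy : Metric.closedBall y r ⊆ Ω) (hζy : ∀ x, x ∉ Metric.closedBall y r → ζ x = 0) :
    IsTestFun Ω (fun x => Wreg p ε u ζ κ x - κ) := by
  have hsub : Function.support (fun x => Wreg p ε u ζ κ x - κ) ⊆ tsupport u ∪ Metric.closedBall y r := by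
    intro x hx
    by_contra h
    rw [Set.mem_union, not_or] at h
    exact hx (Wreg_zero_off hp hκ (image_eq_zero_of_notMem_tsupport h.1) (hζy x h.2))
  have hK : IsCompact (tsupport u ∪ Metric.closedBall y r) :=
    IsCompact.union hu.2.1 (isCompact_closedBall y r)
  refine ⟨(Wreg_smooth hκ hε hu.1 hζs hζ).sub contDiff_const, ?_, ?_⟩
  · exact HasCompactSupport.of_support_subset_isCompact hK hsub
  · exact (closure_minimal hsub hK.isClosed).trans (Set.union_subset hu.2.2 hy)

lemma Wreg_tendsto (hp : 1 < p) (hV : LocBddPotential Ω V) (hε : 0 < ε) (hu : IsTestFun Ω u)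
    (hζs : ContDiff ℝ (⊤ : ℕ∞) ζ) (hζ : ∀ x, 0 ≤ ζ x) (hζ1 : ∀ x, ζ x ≤ 1) {y : Euc d} {r : ℝ}
    (hy : Metric.closedBall y r ⊆ Ω) (hζy : ∀ x, x ∉ Metric.closedBall y r → ζ x = 0) :
    Tendsto (fun κ => ∫ x, V x * |Wreg p ε u ζ κ x - κ| ^ p) (𝓝[>] 0)
      (𝓝 (∫ x, V x * (|u x| ^ p + ε ^ p * ζ x))) := by
  have hp0 : 0 < p := by linarith
  have hK : IsCompact (tsupport u ∪ Metric.closedBall y r) :=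
    IsCompact.union hu.2.1 (isCompact_closedBall y r)
  set S := tsupport u ∪ Metric.closedBall y r with hS
  obtain ⟨M, hM⟩ := hV.2 S (Set.union_subset hu.2.2 hy) hK
  obtain ⟨B, hB⟩ := hu.2.1.exists_bound_of_continuous hu.1.continuous
  set b : Euc d → ℝ := S.indicator (fun _ => |M| * ((|B| + 1) ^ p + ε ^ p)) with hb
  apply tendsto_integral_filter_of_dominated_convergence b
  · filter_upwards [self_mem_nhdsWithin] with κ hκ
    have h1 := (Wreg_smooth (p := p) hκ hε hu.1 hζs hζ).continuous
    exact (hV.1.mul (((h1.sub continuous_const).abs.rpow_const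
      (fun _ => Or.inr hp0.le)).measurable)).aestronglyMeasurable
  · have h1 : ∀ᶠ κ : ℝ in 𝓝[>] 0, κ < 1 := mem_nhdsWithin_of_mem_nhds (gt_mem_nhds one_pos)
    filter_upwards [self_mem_nhdsWithin, h1] with κ hκ hκ1
    rw [Set.mem_Ioi] at hκ
    refine Eventually.of_forall fun x => ?_
    by_cases hx : x ∈ S
    · rw [hb, Set.indicator_of_mem hx, norm_mul]
      have hg := Wreg_ge (u := u) (x := x) hp hκ hε hζ
      have h3 : |Wreg p ε u ζ κ x - κ| ^ p ≤ Wreg p ε u ζ κ x ^ p := by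
        apply Real.rpow_le_rpow (abs_nonneg _) _ hp0.le
        rw [abs_of_nonneg (by linarith)]
        linarith
      rw [Wreg_rpow hp hκ hε hζ] at h3
      have h4 : Ureg u κ x ^ p ≤ (|B| + 1) ^ p := by
        apply Real.rpow_le_rpow (Ureg_pos hκ).le _ hp0.le
        have h5 := Ureg_le (u := u) (x := x) hκ
        have h6 := hB x
        rw [Real.norm_eq_abs] at h6
        linarith [le_abs_self B]
      have h7 : ε ^ p * ζ x ≤ ε ^ p := mul_le_of_le_one_right (by positivity) (hζ1 x)
      have h8 : ‖|Wreg p ε u ζ κ x - κ| ^ p‖ ≤ (|B| + 1) ^ p + ε ^ p := by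
        rw [Real.norm_of_nonneg (by positivity)]
        linarith
      exact mul_le_mul ((hM x hx).trans (le_abs_self M)) h8 (norm_nonneg _) (abs_nonneg _)
    · rw [hb, Set.indicator_of_notMem hx]
      rw [hS, Set.mem_union, not_or] at hx
      rw [Wreg_zero_off hp hκ (image_eq_zero_of_notMem_tsupport hx.1) (hζy x hx.2)]
      simp [Real.zero_rpow hp0.ne']
  · rw [hb, integrable_indicator_iff hK.measurableSet]
    exact integrableOn_const hK.measure_lt_top.ne
  · refine Eventually.of_forall fun x => ?_
    apply Tendsto.mono_left _ nhdsWithin_le_nhds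
    have hc : Continuous (fun κ : ℝ => V x * |Wreg p ε u ζ κ x - κ| ^ p) := by
      unfold Wreg Ureg
      apply continuous_const.mul
      apply Continuous.rpow_const _ (fun _ => Or.inr hp0.le)
      apply Continuous.abs
      apply Continuous.sub _ continuous_id
      apply Continuous.rpow_const _ (fun _ => Or.inr (by positivity))
      apply Continuous.add _ continuous_const
      apply Continuous.rpow_const _ (fun _ => Or.inr hp0.le)
      fun_prop
    convert hc.tendsto 0 using 2
    unfold Wreg Ureg
    have hz := hζ x
    simp only [ne_eq, OfNat.ofNat_ne_zero, not_false_eq_true, zero_pow, add_zero, sub_zero]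
    rw [Real.sqrt_sq_eq_abs, abs_of_nonneg (a := (|u x| ^ p + ε ^ p * ζ x) ^ (1 / p)) (by positivity), ← Real.rpow_mul (by positivity),
      one_div_mul_cancel hp0.ne', Real.rpow_one]
end

lemma log_estimate (d : ℕ) {p : ℝ} (hp : 1 < p) : ∃ K : ℝ, 0 < K ∧ ∀ (Ω : Set (Euc d))
    (V : Euc d → ℝ), LocBddPotential Ω V → (∀ u, IsTestFun Ω u → 0 ≤ energyQ Ω V p u) →
    ∀ (y : Euc d) (ρ M : ℝ), 0 < ρ → 0 ≤ M → Metric.closedBall y (2 * ρ) ⊆ Ω →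
    (∀ x ∈ Metric.closedBall y (2 * ρ), |V x| ≤ M) →
    ∀ u, IsTestFun Ω u → ∀ ε, 0 < ε → ∀ᶠ κ in 𝓝[>] (0 : ℝ),
      min 1 (p - 1) * ε ^ p * ∫ x in Metric.ball y ρ, ‖fderiv ℝ (vlog p ε u κ) x‖ ^ p ≤
      energyQ Ω V p u + ε ^ p * (K / ρ ^ p + M + 1) * volume.real (Metric.closedBall y (2 * ρ)) := by
  obtain ⟨K, hK0, hK⟩ := cutoff_exists d hp
  have hp0 : 0 < p := by linarith
  refine ⟨K, hK0, fun Ω V hV hQ y ρ M hρ hM hy hVM u hu ε hε => ?_⟩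
  obtain ⟨ζ, hζs, hζ0, hζ1, hζr, hζr', hζd⟩ := hK y ρ (2 * ρ) hρ (by linarith)
  have e : 2 * ρ - ρ = ρ := by ring
  rw [e] at hζd
  set k : ℝ := K / ρ ^ p with hk
  have hk0 : 0 ≤ k := by positivity
  set B := Metric.closedBall y (2 * ρ) with hBdef
  have hBm : MeasurableSet B := measurableSet_closedBall
  have hBf : volume B ≠ ⊤ := measure_closedBall_lt_top.ne
  have hζB : ∀ x, x ∉ B → ζ x = 0 := fun x hx =>
    hζr' x (fun h => hx (Metric.ball_subset_closedBall h))
  have hlim := Wreg_tendsto hp hV hε hu hζs hζ0 hζ1 hy hζB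
  have hBpos : 0 < volume.real B := by
    apply ENNReal.toReal_pos _ hBf
    exact (Metric.measure_closedBall_pos volume y (by linarith)).ne'
  have hgap : ∫ x, V x * (|u x| ^ p + ε ^ p * ζ x) <
      (∫ x, V x * |u x| ^ p) + ε ^ p * (M + 1) * volume.real B := by
    have hζc : HasCompactSupport ζ := HasCompactSupport.of_support_subset_isCompact
      (isCompact_closedBall y (2 * ρ)) (fun x hx => by
        by_contra h
        exact hx (hζB x h))
    have hζt : tsupport ζ ⊆ Ω := by
      refine (closure_minimal (fun x hx => ?_) Metric.isClosed_closedBall).trans hy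
      by_contra h
      exact hx (hζB x h)
    have hi2 : Integrable (fun x => V x * ζ x) := integrable_pot_mul hV hζs.continuous hζc hζt
    have h1 : ∫ x, V x * (|u x| ^ p + ε ^ p * ζ x) =
        (∫ x, V x * |u x| ^ p) + ε ^ p * ∫ x, V x * ζ x := by
      rw [← integral_const_mul, ← integral_add (hu.int_pot hp0 hV) (hi2.const_mul _)]
      congr 1
      ext x
      ring
    have h2 : ∫ x, V x * ζ x ≤ M * volume.real B := by
      calc ∫ x, V x * ζ x ≤ ∫ x, B.indicator (fun _ => M) x := by
            apply integral_mono hi2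
            · rw [integrable_indicator_iff hBm]
              exact integrableOn_const hBf
            · intro x
              by_cases hx : x ∈ B
              · rw [Set.indicator_of_mem hx]
                have := (abs_le.1 (hVM x hx)).2
                have := hζ0 x
                have := hζ1 x
                nlinarith
              · rw [Set.indicator_of_notMem hx]
                simp [hζB x hx]
        _ = M * volume.real B := by
            rw [integral_indicator hBm, setIntegral_const, smul_eq_mul, mul_comm]
    rw [h1]
    have hεp : 0 < ε ^ p := by positivity
    have := mul_le_mul_of_nonneg_left h2 hεp.le
    have h3 : 0 < ε ^ p * volume.real B := by positivity
    nlinarith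
  filter_upwards [hlim.eventually_lt_const hgap, self_mem_nhdsWithin] with κ hlt hκ
  rw [Set.mem_Ioi] at hκ
  have hwt := Wreg_test hp hκ hε hu hζs hζ0 hy hζB
  set w : Euc d → ℝ := fun x => Wreg p ε u ζ κ x - κ with hw
  have hQw := hQ w hwt
  rw [energyQ_eq hp0 hwt, integral_add (hwt.int_grad hp0) (hwt.int_pot hp0 hV)] at hQw
  rw [energyQ_eq hp0 hu, integral_add (hu.int_grad hp0) (hu.int_pot hp0 hV)]
  have hvc : Continuous (fun x => ‖fderiv ℝ (vlog p ε u κ) x‖ ^ p) :=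
    (((vlog_smooth hκ hε hu.1).continuous_fderiv (by simp)).norm).rpow_const (fun _ => Or.inr hp0.le)
  have hi1 : Integrable ((Metric.ball y ρ).indicator (fun x => ‖fderiv ℝ (vlog p ε u κ) x‖ ^ p)) := by
    rw [integrable_indicator_iff measurableSet_ball]
    exact cont_integrableOn_ball hvc y ρ
  have hi2 : Integrable (B.indicator (fun _ => ε ^ p * k)) := by
    rw [integrable_indicator_iff hBm]
    exact integrableOn_const hBf
  have hpt : ∀ x, ‖fderiv ℝ w x‖ ^ p + (min 1 (p - 1) * ε ^ p) *
      (Metric.ball y ρ).indicator (fun x => ‖fderiv ℝ (vlog p ε u κ) x‖ ^ p) x ≤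
      ‖fderiv ℝ u x‖ ^ p + B.indicator (fun _ => ε ^ p * k) x := by
    intro x
    have hfw : fderiv ℝ w x = fderiv ℝ (Wreg p ε u ζ κ) x := by
      rw [hw, fderiv_sub_const]
    rw [hfw]
    by_cases hx : x ∈ Metric.ball y ρ
    · rw [Set.indicator_of_mem hx]
      have hζe : ζ =ᶠ[𝓝 x] fun _ => 1 := by
        filter_upwards [Metric.isOpen_ball.mem_nhds hx] with z hz using hζr z hz
      have hd : fderiv ℝ ζ x = 0 := by
        rw [hζe.fderiv_eq]; simp
      have h1 := Wreg_grad_log (u := u) hp hκ hε hu.1 hζs hζ0 (hζr x hx) hd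
      have h2 : 0 ≤ B.indicator (fun _ => ε ^ p * k) x :=
        Set.indicator_nonneg (fun _ _ => by positivity) x
      linarith
    · rw [Set.indicator_of_notMem hx, mul_zero, add_zero]
      by_cases hx' : x ∈ B
      · rw [Set.indicator_of_mem hx']
        exact Wreg_grad hp hκ hε hu.1 hζs hζ0 hk0 (hζd x)
      · rw [Set.indicator_of_notMem hx']
        have h4 := hζd x
        rw [hζB x hx', Real.zero_rpow (by linarith), mul_zero] at h4
        have := Wreg_grad (u := u) (x := x) hp hκ hε hu.1 hζs hζ0 le_rfl (by simpa using h4)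
        simpa using this
  have := integral_mono ((hwt.int_grad hp0).add (hi1.const_mul (min 1 (p - 1) * ε ^ p)))
    ((hu.int_grad hp0).add hi2) hpt
  simp only [Pi.add_apply] at this
  rw [integral_add (hwt.int_grad hp0) (hi1.const_mul _), integral_add (hu.int_grad hp0) hi2,
    integral_const_mul, integral_indicator measurableSet_ball, integral_indicator hBm,
    setIntegral_const, smul_eq_mul] at this
  linarith

/-- volume of the unit ball -/
def omg (d : ℕ) : ℝ := volume.real (Metric.ball (0 : Euc d) 1)

lemma omg_pos (d : ℕ) : 0 < omg d :=
  ENNReal.toReal_pos (Metric.measure_ball_pos volume _ one_pos).ne' measure_ball_lt_top.ne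

lemma vol_ball {d : ℕ} (x : Euc d) {r : ℝ} (hr : 0 < r) :
    volume.real (Metric.ball x r) = r ^ d * omg d := by
  unfold omg Measure.real
  rw [Measure.addHaar_ball_of_pos volume x hr, ENNReal.toReal_mul, ENNReal.toReal_ofReal (by positivity)]
  simp

lemma vol_cball {d : ℕ} (x : Euc d) {r : ℝ} (hr : 0 < r) :
    volume.real (Metric.closedBall x r) = r ^ d * omg d := by
  unfold omg Measure.real
  rw [Measure.addHaar_closedBall volume x hr.le, ENNReal.toReal_mul, ENNReal.toReal_ofReal (by positivity)]
  simp

lemma log_estimate2 (d : ℕ) {p : ℝ} (hp : 1 < p) (R M : ℝ) (hR : 0 < R) (hM : 0 ≤ M) :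
    ∃ C : ℝ, 0 < C ∧ ∀ (Ω : Set (Euc d))
    (V : Euc d → ℝ), LocBddPotential Ω V → (∀ u, IsTestFun Ω u → 0 ≤ energyQ Ω V p u) →
    ∀ (y : Euc d) (ρ : ℝ), 0 < ρ → ρ ≤ 4 * R → Metric.closedBall y (2 * ρ) ⊆ Ω →
    (∀ x ∈ Metric.closedBall y (2 * ρ), |V x| ≤ M) →
    ∀ u, IsTestFun Ω u → ∀ ε, 0 < ε → energyQ Ω V p u ≤ ε ^ p * ρ ^ d → ∀ᶠ κ in 𝓝[>] (0 : ℝ),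
      ρ ^ p * ∫ x in Metric.ball y ρ, ‖fderiv ℝ (vlog p ε u κ) x‖ ^ p ≤ C * ρ ^ d := by
  obtain ⟨K, hK0, hK⟩ := log_estimate d hp
  have hp0 : 0 < p := by linarith
  set c := min 1 (p - 1) with hc
  have hc0 : 0 < c := lt_min one_pos (by linarith)
  have hω := omg_pos d
  refine ⟨((4 * R) ^ p + (K + (M + 1) * (4 * R) ^ p) * (2 ^ d * omg d)) / c, by positivity,
    fun Ω V hV hQ y ρ hρ hρR hy hVM u hu ε hε hle => ?_⟩
  filter_upwards [hK Ω V hV hQ y ρ M hρ hM hy hVM u hu ε hε] with κ hκ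
  rw [vol_cball y (by positivity), mul_pow] at hκ
  set I := ∫ x in Metric.ball y ρ, ‖fderiv ℝ (vlog p ε u κ) x‖ ^ p
  have hεp : 0 < ε ^ p := by positivity
  have hρp : 0 < ρ ^ p := by positivity
  have hρR : ρ ^ p ≤ (4 * R) ^ p := by gcongr
  have h1 : c * I ≤ ρ ^ d + (K / ρ ^ p + M + 1) * (2 ^ d * ρ ^ d * omg d) := by
    have : ε ^ p * (c * I) ≤ ε ^ p * (ρ ^ d + (K / ρ ^ p + M + 1) * (2 ^ d * ρ ^ d * omg d)) := by
      nlinarith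
    exact le_of_mul_le_mul_left this hεp
  rw [div_mul_eq_mul_div, le_div_iff₀ hc0]
  calc ρ ^ p * I * c = ρ ^ p * (c * I) := by ring
    _ ≤ ρ ^ p * (ρ ^ d + (K / ρ ^ p + M + 1) * (2 ^ d * ρ ^ d * omg d)) := by gcongr
    _ = (ρ ^ p + (K + (M + 1) * ρ ^ p) * (2 ^ d * omg d)) * ρ ^ d := by field_simp; ring
    _ ≤ _ := by gcongr

/-- average over a ball -/
def bavg {d : ℕ} (v : Euc d → ℝ) (y : Euc d) (ρ : ℝ) : ℝ :=
  (∫ x in Metric.ball y ρ, v x) / volume.real (Metric.ball y ρ)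

lemma avg_step {d : ℕ} {p : ℝ} (hp : 1 ≤ p) (v : Euc d → ℝ) (hv : ContDiff ℝ 1 v) (y : Euc d)
    {ρ C : ℝ} (hρ : 0 < ρ)
    (h : ρ ^ p * ∫ x in Metric.ball y ρ, ‖fderiv ℝ v x‖ ^ p ≤ C * ρ ^ d) :
    bavg v y (ρ / 2) ≤ bavg v y ρ + (1 + 2 ^ p * 4 ^ d * C / omg d) := by
  have hsub : Metric.ball y (ρ / 2) ⊆ Metric.ball y ρ := Metric.ball_subset_ball (by linarith)
  have hω := omg_pos d
  have h1 := avg_compare hp v hv y hρ (Metric.ball y (ρ / 2)) (Metric.ball y ρ) hsub subset_rfl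
    measurableSet_ball measurableSet_ball
  unfold bavg
  rw [vol_ball y hρ, vol_ball y (half_pos hρ)] at *
  set I1 := ∫ x in Metric.ball y (ρ / 2), v x
  set I2 := ∫ x in Metric.ball y ρ, v x
  set G := ∫ x in Metric.ball y ρ, ‖fderiv ℝ v x‖ ^ p
  rw [div_le_iff₀ (by positivity)]
  have hd : 0 < ρ ^ d := by positivity
  have h2 : ρ ^ d * omg d * I1 ≤ ρ ^ d * omg d * ((I2 / (ρ ^ d * omg d) + (1 + 2 ^ p * 4 ^ d * C / omg d)) *
      ((ρ / 2) ^ d * omg d)) := by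
    refine h1.trans ?_
    calc _ = (ρ / 2) ^ d * omg d * I2 + (ρ / 2) ^ d * omg d * (ρ ^ d * omg d) +
          2 ^ p * 2 ^ d * (ρ ^ d * omg d) * (ρ ^ p * G) := by
          rw [Real.mul_rpow (by norm_num) hρ.le]; ring
      _ ≤ (ρ / 2) ^ d * omg d * I2 + (ρ / 2) ^ d * omg d * (ρ ^ d * omg d) +
          2 ^ p * 2 ^ d * (ρ ^ d * omg d) * (C * ρ ^ d) := by gcongr
      _ = _ := by
        have : (4 : ℝ) ^ d = 2 ^ d * 2 ^ d := by rw [← mul_pow]; norm_num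
        rw [div_pow, this]
        field_simp
        ring
  exact le_of_mul_le_mul_left h2 (by positivity)

lemma avg_chain {d : ℕ} {p : ℝ} (hp : 1 ≤ p) (v : Euc d → ℝ) (hv : ContDiff ℝ 1 v) (y : Euc d)
    {R C : ℝ} (hR : 0 < R) (n : ℕ)
    (h : ∀ j < n, (R / 2 ^ j) ^ p * ∫ x in Metric.ball y (R / 2 ^ j), ‖fderiv ℝ v x‖ ^ p ≤
      C * (R / 2 ^ j) ^ d) :
    bavg v y (R / 2 ^ n) ≤ bavg v y R + n * (1 + 2 ^ p * 4 ^ d * C / omg d) := by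
  induction n with
  | zero => simp
  | succ n ih =>
    have h1 := ih (fun j hj => h j (by omega))
    have h2 := avg_step hp v hv y (by positivity) (h n (by omega))
    rw [div_div, ← pow_succ] at h2
    push_cast
    linarith

lemma avg_start {d : ℕ} {p : ℝ} (hp : 1 ≤ p) (v : Euc d → ℝ) (hv : ContDiff ℝ 1 v) (x₀ y : Euc d)
    {R C C3 : ℝ} (hR : 0 < R) (hy : y ∈ Metric.ball x₀ (2 * R)) (E : Set (Euc d))
    (hE : E ⊆ Metric.ball x₀ R) (hEm : MeasurableSet E) (hE0 : 0 < volume.real E)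
    (hEv : ∫ x in E, v x ≤ C3 * volume.real E)
    (h : (4 * R) ^ p * ∫ x in Metric.ball x₀ (4 * R), ‖fderiv ℝ v x‖ ^ p ≤ C * (4 * R) ^ d) :
    bavg v y R ≤ C3 + (1 + 2 ^ p * 8 ^ d * C * (4 * R) ^ d / volume.real E) := by
  have hsub : Metric.ball y R ⊆ Metric.ball x₀ (4 * R) := by
    apply Metric.ball_subset_ball'
    rw [Metric.mem_ball] at hy
    linarith
  have hsub2 : E ⊆ Metric.ball x₀ (4 * R) := hE.trans (Metric.ball_subset_ball (by linarith))
  have hω := omg_pos d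
  have h1 := avg_compare hp v hv x₀ (by positivity : 0 < 4 * R) (Metric.ball y R) E hsub hsub2
    measurableSet_ball hEm
  unfold bavg
  rw [vol_ball y hR, vol_ball x₀ (by positivity)] at *
  set I1 := ∫ x in Metric.ball y R, v x
  set I2 := ∫ x in E, v x
  set G := ∫ x in Metric.ball x₀ (4 * R), ‖fderiv ℝ v x‖ ^ p
  set e := volume.real E
  rw [div_le_iff₀ (by positivity)]
  have h2 : e * I1 ≤ e * ((C3 + (1 + 2 ^ p * 8 ^ d * C * (4 * R) ^ d / e)) * (R ^ d * omg d)) := by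
    refine h1.trans ?_
    calc _ = R ^ d * omg d * I2 + R ^ d * omg d * e +
          2 ^ p * 2 ^ d * ((4 * R) ^ d * omg d) * ((4 * R) ^ p * G) := by
          rw [Real.mul_rpow (by norm_num) (by positivity : 0 ≤ 4 * R)]; ring
      _ ≤ R ^ d * omg d * (C3 * e) + R ^ d * omg d * e +
          2 ^ p * 2 ^ d * ((4 * R) ^ d * omg d) * (C * (4 * R) ^ d) := by gcongr
      _ = _ := by
        have : (8 : ℝ) ^ d = 2 ^ d * 4 ^ d := by rw [← mul_pow]; norm_num
        rw [mul_pow, this]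
        field_simp
        ring
  exact le_of_mul_le_mul_left h2 (by positivity)

section
variable {d : ℕ} {u : Euc d → ℝ} {κ p ε : ℝ} {x : Euc d}

lemma vlog_nonneg (hp : 1 < p) (hκ : 0 < κ) (hε : 0 < ε) : 0 ≤ vlog p ε u κ x := by
  have hU := Ureg_pos (u := u) (x := x) hκ
  unfold vlog
  have : 0 ≤ Ureg u κ x ^ p / ε ^ p := by positivity
  have h2 := Real.log_nonneg (by linarith : 1 ≤ 1 + Ureg u κ x ^ p / ε ^ p)
  have : 0 ≤ 1 / p := by positivity
  positivity

lemma vlog_le (hp : 1 < p) (hκ : 0 < κ) (hκε : κ ≤ ε) :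
    vlog p ε u κ x ≤ 2 ^ p * (|u x| ^ p / ε ^ p + 1) := by
  have hε : 0 < ε := hκ.trans_le hκε
  have hp0 : 0 < p := by linarith
  have hU := Ureg_pos (u := u) (x := x) hκ
  have h0 : 0 ≤ Ureg u κ x ^ p / ε ^ p := by positivity
  have hεp : 0 < ε ^ p := by positivity
  have h1 : vlog p ε u κ x ≤ Ureg u κ x ^ p / ε ^ p := by
    unfold vlog
    have h2 := Real.log_le_sub_one_of_pos (by linarith : 0 < 1 + Ureg u κ x ^ p / ε ^ p)
    have h3 := Real.log_nonneg (by linarith : 1 ≤ 1 + Ureg u κ x ^ p / ε ^ p)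
    have h4 : 1 / p ≤ 1 := by rw [div_le_one hp0]; exact hp.le
    nlinarith
  refine h1.trans ?_
  rw [div_le_iff₀ hεp]
  calc Ureg u κ x ^ p ≤ (|u x| + κ) ^ p := by gcongr; exact Ureg_le hκ
    _ ≤ 2 ^ p * (|u x| ^ p + κ ^ p) := add_rpow_two (abs_nonneg _) hκ.le hp0.le
    _ ≤ 2 ^ p * (|u x| ^ p + ε ^ p) := by gcongr
    _ = _ := by field_simp

lemma vlog_gt (hp : 1 < p) (hκ : 0 < κ) (hε : 0 < ε) {N : ℝ} (h : ε * Real.exp N < |u x|) :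
    N < vlog p ε u κ x := by
  have hp0 : 0 < p := by linarith
  have hU := Ureg_pos (u := u) (x := x) hκ
  have h1 : ε * Real.exp N < Ureg u κ x := h.trans_le abs_le_Ureg
  have h2 : Real.exp N < Ureg u κ x / ε := by rw [lt_div_iff₀ hε]; linarith
  unfold vlog
  have h3 : Real.exp (p * N) < 1 + Ureg u κ x ^ p / ε ^ p := by
    rw [← Real.div_rpow hU.le hε.le, mul_comm, Real.exp_mul]
    have := Real.rpow_lt_rpow (Real.exp_pos N).le h2 hp0
    linarith
  have h4 := (Real.lt_log_iff_exp_lt ((Real.exp_pos _).trans h3)).2 h3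
  rw [one_div_mul_eq_div, lt_div_iff₀ hp0]
  linarith

lemma cheb (v : Euc d → ℝ) (hv : Continuous v) (hv0 : ∀ x, 0 ≤ v x) (y : Euc d) {δ N : ℝ} (hδ : 0 < δ)
    (hN : 0 < N) (h : bavg v y δ ≤ N) (F : Set (Euc d)) (hF : ∀ x ∈ F, 2 * N < v x)
    (hFm : MeasurableSet F) :
    volume.real (Metric.ball y δ ∩ F) ≤ volume.real (Metric.ball y δ) / 2 := by
  have hω := omg_pos d
  have hB : 0 < volume.real (Metric.ball y δ) := by rw [vol_ball y hδ]; positivity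
  unfold bavg at h
  rw [div_le_iff₀ hB] at h
  have hi := cont_integrableOn_ball hv y δ
  have hfin : volume (Metric.ball y δ ∩ F) ≠ ⊤ :=
    ((measure_mono Set.inter_subset_left).trans_lt measure_ball_lt_top).ne
  have h1 : 2 * N * volume.real (Metric.ball y δ ∩ F) ≤ ∫ x in Metric.ball y δ, v x := by
    calc 2 * N * volume.real (Metric.ball y δ ∩ F) = ∫ x in Metric.ball y δ ∩ F, (2 * N) := by
          rw [setIntegral_const, smul_eq_mul, mul_comm]
      _ ≤ ∫ x in Metric.ball y δ ∩ F, v x := by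
          apply setIntegral_mono_on (integrableOn_const hfin) (hi.mono_set Set.inter_subset_left)
            (measurableSet_ball.inter hFm)
          exact fun x hx => (hF x hx.2).le
      _ ≤ ∫ x in Metric.ball y δ, v x := by
          apply setIntegral_mono_set hi (Eventually.of_forall hv0)
          exact Set.inter_subset_left.eventuallyLE
  have : N * (2 * volume.real (Metric.ball y δ ∩ F)) ≤ N * volume.real (Metric.ball y δ) := by linarith
  have := le_of_mul_le_mul_left this hN
  linarith

end

lemma level_bound {d : ℕ} {p : ℝ} (hp : 1 < p) {Ω : Set (Euc d)} {V : Euc d → ℝ}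
    (hV : LocBddPotential Ω V) (hQ : ∀ u, IsTestFun Ω u → 0 ≤ energyQ Ω V p u)
    (x₀ : Euc d) {R : ℝ} (hR : 0 < R) (hx₀ : Metric.closedBall x₀ (8 * R) ⊆ Ω)
    (E : Set (Euc d)) (hE : E ⊆ Metric.ball x₀ R) (hEm : MeasurableSet E) (hE0 : 0 < volume.real E)
    {CE : ℝ} (hCE : 0 ≤ CE) (hEQ : ∀ u, IsTestFun Ω u → ∫ x in E, |u x| ^ p ≤ CE * energyQ Ω V p u) :
    ∃ A L : ℝ, 0 < A ∧ 1 ≤ L ∧ ∀ u, IsTestFun Ω u → ∀ T, 0 < T → energyQ Ω V p u ≤ T → ∀ n : ℕ,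
      ∃ l, 0 ≤ l ∧ l ^ p ≤ T * A * L ^ n ∧ ∀ y ∈ Metric.ball x₀ (2 * R),
        volume.real (Metric.ball y (R / 2 ^ n) ∩ {x | l < |u x|}) ≤
          volume.real (Metric.ball y (R / 2 ^ n)) / 2 := by
  have hp0 : 0 < p := by linarith
  have hω := omg_pos d
  obtain ⟨M', hM'⟩ := hV.2 _ hx₀ (isCompact_closedBall x₀ (8 * R))
  set M := max M' 0 with hMdef
  have hM0 : 0 ≤ M := le_max_right _ _
  have hM : ∀ x ∈ Metric.closedBall x₀ (8 * R), |V x| ≤ M := fun x hx => (hM' x hx).trans (le_max_left _ _)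
  obtain ⟨C, hC0, hC⟩ := log_estimate2 d hp R M hR hM0
  set e := volume.real E with he
  have hEfin : volume E ≠ ⊤ := ((measure_mono hE).trans_lt measure_ball_lt_top).ne
  set C3 := 2 ^ p * (CE * R ^ d / e + 1) with hC3
  set C1 := C3 + (1 + 2 ^ p * 8 ^ d * C * (4 * R) ^ d / e) with hC1
  set C0 := 1 + 2 ^ p * 4 ^ d * C / omg d with hC0def
  have hC3p : 0 < C3 := by positivity
  have hC1p : 0 < C1 := by positivity
  have hC0p : 0 < C0 := by positivity
  refine ⟨Real.exp (2 * p * C1) / R ^ d, 2 ^ d * Real.exp (2 * p * C0), by positivity, ?_,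
    fun u hu T hT hQT n => ?_⟩
  · have h1 : (1 : ℝ) ≤ 2 ^ d := one_le_pow₀ (by norm_num)
    have h2 : 1 ≤ Real.exp (2 * p * C0) := Real.one_le_exp (by positivity)
    nlinarith
  set δ := R / 2 ^ n with hδdef
  have hδ : 0 < δ := by positivity
  have hδR : δ ≤ R := div_le_self hR.le (one_le_pow₀ (by norm_num))
  set ε := (T / δ ^ d) ^ (1 / p) with hεdef
  have hε : 0 < ε := by positivity
  have hεp : ε ^ p = T / δ ^ d := by
    rw [hεdef, ← Real.rpow_mul (by positivity), one_div_mul_cancel hp0.ne', Real.rpow_one]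
  have hQρ : ∀ ρ, δ ≤ ρ → energyQ Ω V p u ≤ ε ^ p * ρ ^ d := by
    intro ρ hρ
    refine hQT.trans ?_
    calc T = T / δ ^ d * δ ^ d := by field_simp
      _ ≤ ε ^ p * ρ ^ d := by rw [hεp]; gcongr
  set N := C1 + n * C0 with hN
  have hNp : 0 < N := by positivity
  refine ⟨ε * Real.exp (2 * N), by positivity, ?_, fun y hy => ?_⟩
  · apply le_of_eq
    rw [Real.mul_rpow hε.le (Real.exp_pos _).le, hεp, ← Real.exp_mul, mul_pow, ← Real.exp_nat_mul, hδdef,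
      div_pow, ← pow_mul, ← pow_mul, mul_comm d n]
    have : Real.exp (2 * N * p) = Real.exp (2 * p * C1) * Real.exp (n * (2 * p * C0)) := by
      rw [← Real.exp_add, hN]; congr 1; ring
    rw [this]
    field_simp
  · have hyd : dist y x₀ < 2 * R := hy
    have hrad : ∀ j : ℕ, R / 2 ^ j ≤ R := fun j => div_le_self hR.le (one_le_pow₀ (by norm_num))
    have hball : ∀ j : ℕ, Metric.closedBall y (2 * (R / 2 ^ j)) ⊆ Metric.closedBall x₀ (8 * R) := by
      intro j
      apply Metric.closedBall_subset_closedBall'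
      have := hrad j
      linarith
    have ev1 : ∀ᶠ κ in 𝓝[>] (0 : ℝ), ∀ j ∈ Finset.range n, (R / 2 ^ j) ^ p *
        ∫ x in Metric.ball y (R / 2 ^ j), ‖fderiv ℝ (vlog p ε u κ) x‖ ^ p ≤ C * (R / 2 ^ j) ^ d := by
      rw [Finset.eventually_all]
      intro j hj
      apply hC Ω V hV hQ y (R / 2 ^ j) (by positivity) (by linarith [hrad j])
        ((hball j).trans hx₀) (fun x hx => hM x (hball j hx)) u hu ε hε
      apply hQρ
      rw [hδdef]
      have := Finset.mem_range.1 hj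
      gcongr
      norm_num
    have e8 : 2 * (4 * R) = 8 * R := by ring
    have ev2 := hC Ω V hV hQ x₀ (4 * R) (by positivity) le_rfl (by rwa [e8]) (by rwa [e8]) u hu ε hε
      (hQρ _ (by linarith))
    have ev3 : ∀ᶠ κ : ℝ in 𝓝[>] 0, κ < ε := mem_nhdsWithin_of_mem_nhds (gt_mem_nhds hε)
    obtain ⟨κ, ⟨⟨h1, h2⟩, h3⟩, hκ⟩ := (((ev1.and ev2).and ev3).and self_mem_nhdsWithin).exists
    have hvs : ContDiff ℝ 1 (vlog p ε u κ) := (vlog_smooth hκ hε hu.1).of_le (by exact_mod_cast le_top)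
    have hEv : ∫ x in E, vlog p ε u κ x ≤ C3 * e := by
      have hiu : IntegrableOn (fun x => |u x| ^ p) E := (hu.int_abs hp0).integrableOn
      calc ∫ x in E, vlog p ε u κ x ≤ ∫ x in E, (2 ^ p / ε ^ p * |u x| ^ p + 2 ^ p) := by
            apply setIntegral_mono
            · exact (cont_integrableOn_ball hvs.continuous x₀ R).mono_set hE
            · exact (hiu.const_mul _).add (integrableOn_const hEfin)
            · intro x
              refine (vlog_le hp hκ h3.le).trans (le_of_eq ?_)
              ring
        _ = 2 ^ p / ε ^ p * (∫ x in E, |u x| ^ p) + 2 ^ p * e := by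
            rw [integral_add (hiu.const_mul _) (integrableOn_const hEfin), integral_const_mul,
              setIntegral_const, smul_eq_mul, mul_comm (volume.real E)]
        _ ≤ 2 ^ p / ε ^ p * (CE * (ε ^ p * R ^ d)) + 2 ^ p * e := by
            gcongr
            refine (hEQ u hu).trans ?_
            gcongr
            exact hQρ R hδR
        _ = C3 * e := by rw [hC3]; field_simp
    have b1 := avg_start hp.le _ hvs x₀ y hR hy E hE hEm hE0 hEv h2
    have b2 := avg_chain hp.le _ hvs y hR n (fun j hj => h1 j (Finset.mem_range.2 hj))
    refine cheb _ hvs.continuous (fun x => vlog_nonneg hp hκ hε) y hδ hNp (b2.trans ?_) _ ?_ ?_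
    · linarith
    · intro x hx
      exact vlog_gt hp hκ hε hx
    · exact measurableSet_lt measurable_const hu.1.continuous.abs.measurable

lemma iter_bound {m : ℕ → ℝ} {θ L X S : ℝ} (hθ : 0 ≤ θ) (hL : 1 ≤ L) (hX : 0 ≤ X) (hθL : θ * L ≤ 1 / 2)
    (hS : ∀ k, m k ≤ S) (hS0 : 0 ≤ S) (h : ∀ k, m k ≤ X * L ^ k + θ * m (k + 1)) : m 0 ≤ 2 * X := by
  have h1 : ∀ n : ℕ, m 0 ≤ 2 * X * (1 - (1 / 2) ^ n) + θ ^ n * m n := by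
    intro n
    induction n with
    | zero => simp
    | succ n ih =>
      have h2 : θ ^ n * m n ≤ θ ^ n * (X * L ^ n + θ * m (n + 1)) := by
        gcongr
        exact h n
      have h3 : (θ * L) ^ n ≤ (1 / 2) ^ n := by gcongr
      rw [mul_pow] at h3
      have h4 := mul_le_mul_of_nonneg_left h3 hX
      rw [pow_succ, pow_succ]
      nlinarith
  have hθ2 : θ ≤ 1 / 2 := by nlinarith
  have h2 : ∀ n : ℕ, m 0 ≤ 2 * X + (1 / 2) ^ n * S := by
    intro n
    have h3 : θ ^ n * m n ≤ (1 / 2) ^ n * S := by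
      calc θ ^ n * m n ≤ θ ^ n * S := by gcongr; exact hS n
        _ ≤ _ := by gcongr
    have h4 : 0 ≤ 2 * X * (1 / 2) ^ n := by positivity
    linarith [h1 n]
  have h3 : Tendsto (fun n : ℕ => 2 * X + (1 / 2) ^ n * S) atTop (𝓝 (2 * X + 0 * S)) :=
    ((tendsto_pow_atTop_nhds_zero_of_lt_one (by norm_num) (by norm_num)).mul_const S).const_add _
  have := ge_of_tendsto' h3 h2
  linarith

lemma local_lemma {d : ℕ} {p : ℝ} (hp : 1 < p) {Ω : Set (Euc d)} {V : Euc d → ℝ}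
    (hV : LocBddPotential Ω V) (hQ : ∀ u, IsTestFun Ω u → 0 ≤ energyQ Ω V p u)
    (x₀ : Euc d) {R : ℝ} (hR : 0 < R) (hx₀ : Metric.closedBall x₀ (8 * R) ⊆ Ω)
    (E : Set (Euc d)) (hE : E ⊆ Metric.ball x₀ R) (hEm : MeasurableSet E) (hE0 : 0 < volume.real E)
    {CE : ℝ} (hCE : 0 ≤ CE) (hEQ : ∀ u, IsTestFun Ω u → ∫ x in E, |u x| ^ p ≤ CE * energyQ Ω V p u) :
    ∃ C : ℝ, 0 < C ∧ ∀ u, IsTestFun Ω u →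
      ∫ x in Metric.ball x₀ R, |u x| ^ p ≤ C * energyQ Ω V p u := by
  have hp0 : 0 < p := by linarith
  have hω := omg_pos d
  obtain ⟨M', hM'⟩ := hV.2 _ hx₀ (isCompact_closedBall x₀ (8 * R))
  set M := max M' 0 with hMdef
  have hM0 : 0 ≤ M := le_max_right _ _
  have hM : ∀ x ∈ Metric.closedBall x₀ (8 * R), |V x| ≤ M := fun x hx => (hM' x hx).trans (le_max_left _ _)
  obtain ⟨A, L, hA, hL, hlev⟩ := level_bound hp hV hQ x₀ hR hx₀ E hE hEm hE0 hCE hEQ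
  obtain ⟨K, hK0, hK⟩ := caccioppoli d hp
  set B : ℝ := 2 ^ p * (2 * 2 ^ p * 2 ^ d) with hB
  have hBp : 0 < B := by positivity
  set D : ℝ := R ^ p * M + K * 4 ^ p with hD
  have hDp : 0 < D := by positivity
  set q : ℝ := (1 / 2) ^ p with hq
  have hq0 : 0 < q := by positivity
  have hq1 : q < 1 := Real.rpow_lt_one (by norm_num) (by norm_num) hp0
  obtain ⟨ℓ, hℓ3, hℓ⟩ : ∃ ℓ : ℕ, 3 ≤ ℓ ∧ B * D * q ^ ℓ * L ≤ 1 / 2 := by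
    have h1 : Tendsto (fun ℓ : ℕ => B * D * q ^ ℓ * L) atTop (𝓝 (B * D * 0 * L)) :=
      ((tendsto_pow_atTop_nhds_zero_of_lt_one hq0.le hq1).const_mul _).mul_const _
    have h2 := h1.eventually_le_const (by norm_num : B * D * 0 * L < 1 / 2)
    obtain ⟨ℓ, h⟩ := (h2.and (eventually_ge_atTop 3)).exists
    exact ⟨ℓ, h.2, h.1⟩
  set A' : ℝ := 2 ^ p * (A * L ^ ℓ) * ((2 * R) ^ d * omg d) + B * R ^ p with hA'
  have hA'p : 0 < A' := by positivity
  refine ⟨2 * A', by positivity, fun u hu => ?_⟩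
  have main : ∀ T, 0 < T → energyQ Ω V p u ≤ T → ∫ x in Metric.ball x₀ R, |u x| ^ p ≤ 2 * (T * A') := by
    intro T hT hQT
    have hi := hu.int_abs hp0
    set m : ℕ → ℝ := fun k => ∫ x in Metric.ball x₀ (2 * R - R / 2 ^ k), |u x| ^ p with hm
    have hm0 : m 0 = ∫ x in Metric.ball x₀ R, |u x| ^ p := by
      simp only [hm, pow_zero, div_one]
      congr 3
      ring
    rw [← hm0]
    have hmS : ∀ k, m k ≤ ∫ x, |u x| ^ p := fun k =>
      setIntegral_le_integral hi (Eventually.of_forall fun x => by positivity)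
    refine iter_bound (by positivity : 0 ≤ B * D * q ^ ℓ) hL (by positivity) hℓ hmS
      (integral_nonneg fun x => by positivity) fun k => ?_
    set s : ℝ := R / 2 ^ k with hs
    have hsp : 0 < s := by positivity
    have hsR : s ≤ R := div_le_self hR.le (one_le_pow₀ (by norm_num))
    set δ : ℝ := R / 2 ^ (k + ℓ) with hδ
    have hδp : 0 < δ := by positivity
    have hδs : δ = s * (1 / 2) ^ ℓ := by
      rw [hδ, hs, pow_add]; simp; field_simp
    have hδ8 : δ ≤ s / 8 := by
      have : ((1 : ℝ) / 2) ^ ℓ ≤ (1 / 2) ^ 3 := pow_le_pow_of_le_one (by norm_num) (by norm_num) hℓ3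
      rw [hδs]
      nlinarith
    obtain ⟨l, hl0, hlp, hly⟩ := hlev u hu T hT hQT (k + ℓ)
    have hss := small_scale_bound hp.le u (hu.1.of_le (by exact_mod_cast le_top)) x₀
      (r := 2 * R - s + δ) hδp hl0 (fun y hy => hly y (Metric.ball_subset_ball (by linarith) hy))
    have hs1 : R / 2 ^ (k + 1) = s / 2 := by rw [hs, pow_succ]; field_simp
    have hM2 : ∀ x ∈ Metric.ball x₀ (2 * R - s / 2), |V x| ≤ M := fun x hx =>
      hM x (Metric.ball_subset_closedBall (Metric.ball_subset_ball (by linarith) hx))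
    have hcc := hK Ω V hV hQ x₀ (2 * R - s + δ + δ) (2 * R - s / 2) M (by linarith) (by linarith) hM0
      hM2 u hu
    have e1 : 2 * R - s + δ - δ = 2 * R - s := by ring
    rw [e1] at hss
    have hmk : m (k + 1) = ∫ x in Metric.ball x₀ (2 * R - s / 2), |u x| ^ p := by
      simp only [hm, hs1]
    rw [← hmk] at hcc
    set G := ∫ x in Metric.ball x₀ (2 * R - s + δ + δ), ‖fderiv ℝ u x‖ ^ p
    have hmk0 : 0 ≤ m (k + 1) := by
      rw [hmk]; exact integral_nonneg fun x => by positivity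
    have hvol : volume.real (Metric.ball x₀ (2 * R - s + δ)) ≤ (2 * R) ^ d * omg d := by
      rw [← vol_ball x₀ (by positivity : 0 < 2 * R)]
      exact measureReal_mono (Metric.ball_subset_ball (by linarith)) measure_ball_lt_top.ne
    have hgap : (s / 4) ^ p ≤ (2 * R - s / 2 - (2 * R - s + δ + δ)) ^ p := by
      gcongr
      linarith
    have hG : G ≤ T + (M + K / (s / 4) ^ p) * m (k + 1) := by
      refine hcc.trans ?_
      gcongr
    have hδp' : δ ^ p = s ^ p * q ^ ℓ := by
      rw [hδs, Real.mul_rpow hsp.le (by positivity), hq, ← Real.rpow_natCast, ← Real.rpow_natCast,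
        ← Real.rpow_mul (by norm_num), ← Real.rpow_mul (by norm_num), mul_comm p]
    have hδR : δ ^ p ≤ R ^ p := by
      gcongr
      linarith
    have hmain2 : δ ^ p * (M + K / (s / 4) ^ p) ≤ D * q ^ ℓ := by
      have h1 : s ^ p * (M + K / (s / 4) ^ p) = s ^ p * M + K * 4 ^ p := by
        rw [Real.div_rpow hsp.le (by norm_num)]
        field_simp
      calc δ ^ p * (M + K / (s / 4) ^ p) = (s ^ p * (M + K / (s / 4) ^ p)) * q ^ ℓ := by rw [hδp']; ring
        _ ≤ D * q ^ ℓ := by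
          rw [h1, hD]
          gcongr
    have hLk : 1 ≤ L ^ k := one_le_pow₀ hL
    calc m k ≤ _ := hss
      _ = 2 ^ p * l ^ p * volume.real (Metric.ball x₀ (2 * R - s + δ)) + B * (δ ^ p * G) := by
        rw [Real.mul_rpow (by norm_num) hδp.le, hB]; ring
      _ ≤ 2 ^ p * (T * A * L ^ (k + ℓ)) * ((2 * R) ^ d * omg d) +
          B * (δ ^ p * (T + (M + K / (s / 4) ^ p) * m (k + 1))) := by gcongr
      _ = T * (2 ^ p * (A * L ^ ℓ) * ((2 * R) ^ d * omg d)) * L ^ k +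
          B * (δ ^ p * T) * 1 + B * (δ ^ p * (M + K / (s / 4) ^ p)) * m (k + 1) := by
        rw [pow_add]; ring
      _ ≤ T * (2 ^ p * (A * L ^ ℓ) * ((2 * R) ^ d * omg d)) * L ^ k +
          B * (R ^ p * T) * L ^ k + B * (D * q ^ ℓ) * m (k + 1) := by gcongr
      _ = T * A' * L ^ k + B * D * q ^ ℓ * m (k + 1) := by rw [hA']; ring
  have hQu := hQ u hu
  apply le_of_forall_pos_le_add
  intro η hη
  have := main (energyQ Ω V p u + η / (2 * A')) (by positivity) (by
    have : 0 < η / (2 * A') := by positivity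
    linarith)
  refine this.trans (le_of_eq ?_)
  field_simp

/-- Points near which the energy controls the `p`-norm. -/
def IsGoodPt {d : ℕ} (Ω : Set (Euc d)) (V : Euc d → ℝ) (p : ℝ) (x : Euc d) : Prop :=
  ∃ r : ℝ, 0 < r ∧ ∃ C : ℝ, 0 < C ∧ ∀ u, IsTestFun Ω u →
    ∫ y in Metric.ball x r, |u y| ^ p ≤ C * energyQ Ω V p u

section
variable {d : ℕ} {p : ℝ} {Ω : Set (Euc d)} {V : Euc d → ℝ}

lemma setInt_mono (hp : 0 < p) {u : Euc d → ℝ} (hu : IsTestFun Ω u) {s t : Set (Euc d)} (hst : s ⊆ t) :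
    ∫ y in s, |u y| ^ p ≤ ∫ y in t, |u y| ^ p :=
  setIntegral_mono_set (hu.int_abs hp).integrableOn (Eventually.of_forall fun x => by positivity)
    hst.eventuallyLE

lemma exists_big_ball (hΩ : IsOpen Ω) {x : Euc d} (hx : x ∈ Ω) :
    ∃ R : ℝ, 0 < R ∧ Metric.closedBall x (8 * R) ⊆ Ω := by
  obtain ⟨ε, hε, h⟩ := Metric.nhds_basis_closedBall.mem_iff.1 (hΩ.mem_nhds hx)
  refine ⟨ε / 8, by positivity, ?_⟩
  have : 8 * (ε / 8) = ε := by ring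
  rwa [this]

lemma good_open (hp : 0 < p) : IsOpen {x | IsGoodPt Ω V p x} := by
  rw [Metric.isOpen_iff]
  rintro x ⟨r, hr, C, hC, h⟩
  refine ⟨r, hr, fun z hz => ⟨r - dist z x, by linarith [Metric.mem_ball.1 hz], C, hC, fun u hu => ?_⟩⟩
  refine (setInt_mono hp hu ?_).trans (h u hu)
  apply Metric.ball_subset_ball'
  linarith

lemma good_all (hp : 1 < p) (hΩo : IsOpen Ω) (hΩc : IsConnected Ω)
    (hV : LocBddPotential Ω V) (hQ : ∀ u, IsTestFun Ω u → 0 ≤ energyQ Ω V p u)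
    (hne : (Ω ∩ {x | IsGoodPt Ω V p x}).Nonempty) : Ω ⊆ {x | IsGoodPt Ω V p x} := by
  have hp0 : 0 < p := by linarith
  apply hΩc.isPreconnected.subset_of_closure_inter_subset (good_open hp0) hne
  rintro x ⟨hxc, hxΩ⟩
  obtain ⟨R, hR, hxR⟩ := exists_big_ball hΩo hxΩ
  obtain ⟨y, ⟨r, hr, C, hC, h⟩, hyx⟩ := Metric.mem_closure_iff.1 hxc R hR
  rw [dist_comm] at hyx
  set s := min r (R - dist y x) with hs
  have hs0 : 0 < s := lt_min hr (by linarith)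
  have hsub : Metric.ball y s ⊆ Metric.ball x R := by
    apply Metric.ball_subset_ball'
    linarith [min_le_right r (R - dist y x)]
  have hω := omg_pos d
  obtain ⟨C', hC', h'⟩ := local_lemma hp hV hQ x hR hxR (Metric.ball y s) hsub measurableSet_ball
    (by rw [vol_ball y hs0]; positivity) hC.le (fun u hu =>
      (setInt_mono hp0 hu (Metric.ball_subset_ball (min_le_left _ _))).trans (h u hu))
  exact ⟨R, hR, C', hC', h'⟩

lemma good_nonempty (hp : 1 < p) (hΩo : IsOpen Ω) {V₁ V₂ : Euc d → ℝ}
    (hV₁ : LocBddPotential Ω V₁) (hV₂ : LocBddPotential Ω V₂)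
    (hle : ∀ᵐ x ∂(volume.restrict Ω), V₁ x ≤ V₂ x)
    (hlt : 0 < volume {x ∈ Ω | V₁ x < V₂ x})
    (hQ₁ : ∀ u : Euc d → ℝ, IsTestFun Ω u → 0 ≤ energyQ Ω V₁ p u) :
    (∀ u, IsTestFun Ω u → 0 ≤ energyQ Ω V₂ p u) ∧ (Ω ∩ {x | IsGoodPt Ω V₂ p x}).Nonempty := by
  have hp0 : 0 < p := by linarith
  have hdiff : ∀ u, IsTestFun Ω u → energyQ Ω V₂ p u =
      energyQ Ω V₁ p u + ∫ x in Ω, (V₂ x - V₁ x) * |u x| ^ p := by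
    intro u hu
    unfold energyQ
    simp_rw [norm_gradient_eq]
    rw [← integral_add]
    · congr 1
      ext x
      ring
    · exact ((hu.int_grad hp0).add (hu.int_pot hp0 hV₁)).integrableOn
    · have : Integrable (fun x => (V₂ x - V₁ x) * |u x| ^ p) := by
        simp only [sub_mul]
        exact (hu.int_pot hp0 hV₂).sub (hu.int_pot hp0 hV₁)
      exact this.integrableOn
  have hnn : ∀ u : Euc d → ℝ, 0 ≤ᵐ[volume.restrict Ω] fun x => (V₂ x - V₁ x) * |u x| ^ p := by
    intro u
    filter_upwards [hle] with x hx
    have : 0 ≤ V₂ x - V₁ x := by linarith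
    show 0 ≤ (V₂ x - V₁ x) * |u x| ^ p
    positivity
  have hQ₂ : ∀ u, IsTestFun Ω u → 0 ≤ energyQ Ω V₂ p u := by
    intro u hu
    rw [hdiff u hu]
    have := integral_nonneg_of_ae (hnn u)
    linarith [hQ₁ u hu]
  refine ⟨hQ₂, ?_⟩
  have hU : {x ∈ Ω | V₁ x < V₂ x} ⊆ ⋃ n : ℕ, {x ∈ Ω | 1 / ((n : ℝ) + 1) ≤ V₂ x - V₁ x} := by
    rintro x ⟨hxΩ, hx⟩
    obtain ⟨n, hn⟩ := exists_nat_one_div_lt (sub_pos.2 hx)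
    exact Set.mem_iUnion.2 ⟨n, hxΩ, hn.le⟩
  obtain ⟨n, hn⟩ : ∃ n : ℕ, volume {x ∈ Ω | 1 / ((n : ℝ) + 1) ≤ V₂ x - V₁ x} ≠ 0 := by
    by_contra h
    push Not at h
    exact hlt.ne' (measure_mono_null hU (measure_iUnion_null h))
  set F := {x ∈ Ω | 1 / ((n : ℝ) + 1) ≤ V₂ x - V₁ x} with hF
  have hFm : MeasurableSet F :=
    hΩo.measurableSet.inter (measurableSet_le measurable_const (hV₂.1.sub hV₁.1))
  obtain ⟨x, hxF, hx⟩ := exists_mem_forall_mem_nhdsWithin_pos_measure hn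
  obtain ⟨R, hR, hxR⟩ := exists_big_ball hΩo hxF.1
  have hE0 : 0 < volume.real (Metric.ball x R ∩ F) := by
    apply ENNReal.toReal_pos
    · exact (hx _ (Filter.inter_mem (mem_nhdsWithin_of_mem_nhds (Metric.ball_mem_nhds x hR))
        self_mem_nhdsWithin)).ne'
    · exact ((measure_mono Set.inter_subset_left).trans_lt measure_ball_lt_top).ne
  have hn1 : (0 : ℝ) < n + 1 := by positivity
  obtain ⟨C, hC, h⟩ := local_lemma hp hV₂ hQ₂ x hR hxR (Metric.ball x R ∩ F) Set.inter_subset_left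
    (measurableSet_ball.inter hFm) hE0 hn1.le (fun u hu => by
      have hi : Integrable (fun x => (V₂ x - V₁ x) * |u x| ^ p) := by
        simp only [sub_mul]
        exact (hu.int_pot hp0 hV₂).sub (hu.int_pot hp0 hV₁)
      have h1 : ∫ y in Metric.ball x R ∩ F, 1 / ((n : ℝ) + 1) * |u y| ^ p ≤
          ∫ y in Metric.ball x R ∩ F, (V₂ y - V₁ y) * |u y| ^ p := by
        apply setIntegral_mono_on ((hu.int_abs hp0).const_mul _).integrableOn hi.integrableOn
          (measurableSet_ball.inter hFm)
        intro y hy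
        have := hy.2.2
        gcongr
      have hsub : Metric.ball x R ∩ F ⊆ Ω := fun y hy => hy.2.1
      have h2 : ∫ y in Metric.ball x R ∩ F, (V₂ y - V₁ y) * |u y| ^ p ≤
          ∫ y in Ω, (V₂ y - V₁ y) * |u y| ^ p :=
        setIntegral_mono_set hi.integrableOn (hnn u)
          hsub.eventuallyLE
      rw [integral_const_mul, one_div_mul_eq_div, div_le_iff₀ hn1] at h1
      refine h1.trans ?_
      rw [mul_comm]
      gcongr
      rw [hdiff u hu]
      linarith [hQ₁ u hu])
  exact ⟨x, hxF.1, R, hR, C, hC, h⟩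

lemma gap_of_good (hp : 1 < p) (hΩ : Ω.Nonempty)
    (hQ : ∀ u, IsTestFun Ω u → 0 ≤ energyQ Ω V p u)
    (hg : Ω ⊆ {x | IsGoodPt Ω V p x}) : HasSpectralGap Ω V p := by
  have hp0 : 0 < p := by linarith
  have hg' : ∀ x : Euc d, ∃ r : ℝ, 0 < r ∧ (x ∈ Ω → ∃ C : ℝ, 0 < C ∧ ∀ u, IsTestFun Ω u →
      ∫ y in Metric.ball x r, |u y| ^ p ≤ C * energyQ Ω V p u) := by
    intro x
    by_cases hx : x ∈ Ω
    · obtain ⟨r, hr, h⟩ := hg hx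
      exact ⟨r, hr, fun _ => h⟩
    · exact ⟨1, one_pos, fun h => absurd h hx⟩
  choose ρ hρ hρC using hg'
  obtain ⟨t, htΩ, htc, ht⟩ := TopologicalSpace.countable_cover_nhdsWithin (s := Ω)
    (f := fun x => Metric.ball x (ρ x))
    (fun x _ => mem_nhdsWithin_of_mem_nhds (Metric.ball_mem_nhds x (hρ x)))
  have htn : t.Nonempty := by
    obtain ⟨x, hx⟩ := hΩ
    obtain ⟨y, hy, _⟩ := Set.mem_iUnion₂.1 (ht hx)
    exact ⟨y, hy⟩
  obtain ⟨z, hz⟩ := htc.exists_eq_range htn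
  have hzΩ : ∀ k, z k ∈ Ω := fun k => htΩ (by rw [hz]; exact ⟨k, rfl⟩)
  choose C hC hCu using fun k => hρC (z k) (hzΩ k)
  set r : ℕ → ℝ := fun k => ρ (z k) with hr
  have hr0 : ∀ k, 0 < r k := fun k => hρ _
  set b : ℕ → ℝ := fun k => 1 / 2 / 2 ^ k / (1 + C k) with hb
  have hb0 : ∀ k, 0 < b k := fun k => by have := hC k; positivity
  have hb1 : ∀ k, b k ≤ 1 / 2 / 2 ^ k := fun k => by
    have := hC k
    exact div_le_self (by positivity) (by linarith)
  set f : ℕ → Euc d → ℝ := fun k x => b k / r k * max 0 (r k - dist x (z k)) with hf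
  have hfc : ∀ k, Continuous (f k) := fun k => by fun_prop
  have hf0 : ∀ k x, 0 ≤ f k x := fun k x => by
    have := hb0 k
    have := hr0 k
    positivity
  have hfb : ∀ k x, f k x ≤ b k := fun k x => by
    have h1 : max 0 (r k - dist x (z k)) ≤ r k :=
      max_le (hr0 k).le (by linarith [dist_nonneg (x := x) (y := z k)])
    calc f k x ≤ b k / r k * r k := by
          have := hb0 k
          have := hr0 k
          simp only [hf]
          gcongr
      _ = b k := div_mul_cancel₀ _ (hr0 k).ne'
  have hfz : ∀ k x, x ∉ Metric.ball (z k) (r k) → f k x = 0 := fun k x hx => by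
    rw [Metric.mem_ball, not_lt] at hx
    simp only [hf]
    rw [max_eq_left (by linarith), mul_zero]
  have hgs : Summable (fun k : ℕ => (1 : ℝ) / 2 / 2 ^ k) := (hasSum_geometric_two' 1).summable
  have hfn : ∀ k x, ‖f k x‖ ≤ 1 / 2 / 2 ^ k := fun k x => by
    rw [Real.norm_of_nonneg (hf0 k x)]
    exact (hfb k x).trans (hb1 k)
  have hfs : ∀ x, Summable fun k => f k x := fun x =>
    Summable.of_norm_bounded hgs (fun k => hfn k x)
  refine ⟨fun x => ∑' k, f k x, (continuous_tsum hfc hgs hfn).continuousOn, fun x hx => ?_,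
    fun u hu => ?_⟩
  · obtain ⟨y, hy, hxy⟩ := Set.mem_iUnion₂.1 (ht hx)
    rw [hz] at hy
    obtain ⟨k, rfl⟩ := hy
    apply (hfs x).tsum_pos (fun k => hf0 k x) k
    have h1 : dist x (z k) < r k := hxy
    have h2 : 0 < max 0 (r k - dist x (z k)) := lt_max_of_lt_right (by linarith)
    have := hb0 k
    have := hr0 k
    simp only [hf]
    positivity
  · have hi := hu.int_abs hp0
    have hFi : ∀ k, Integrable (fun x => f k x * |u x| ^ p) := fun k => by
      refine hi.bdd_mul (c := b k) (hfc k).aestronglyMeasurable (Eventually.of_forall fun x => ?_)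
      rw [Real.norm_of_nonneg (hf0 k x)]
      exact hfb k x
    have hFb : ∀ k, ∫ x in Ω, f k x * |u x| ^ p ≤ energyQ Ω V p u / 2 / 2 ^ k := by
      intro k
      calc ∫ x in Ω, f k x * |u x| ^ p ≤ ∫ x, f k x * |u x| ^ p :=
            setIntegral_le_integral (hFi k) (Eventually.of_forall fun x =>
              mul_nonneg (hf0 k x) (by positivity))
        _ ≤ ∫ x, b k * (Metric.ball (z k) (r k)).indicator (fun x => |u x| ^ p) x := by
            apply integral_mono (hFi k) ((hi.indicator measurableSet_ball).const_mul _)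
            intro x
            by_cases hx : x ∈ Metric.ball (z k) (r k)
            · simp only [Set.indicator_of_mem hx]
              have := hfb k x
              gcongr
            · simp only [Set.indicator_of_notMem hx, hfz k x hx]
              simp
        _ = b k * ∫ x in Metric.ball (z k) (r k), |u x| ^ p := by
            rw [integral_const_mul, integral_indicator measurableSet_ball]
        _ ≤ b k * (C k * energyQ Ω V p u) :=
            mul_le_mul_of_nonneg_left (hCu k u hu) (hb0 k).le
        _ = energyQ Ω V p u / 2 / 2 ^ k * (C k / (1 + C k)) := by simp only [hb]; ring
        _ ≤ energyQ Ω V p u / 2 / 2 ^ k * 1 := by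
            have := hQ u hu
            have := hC k
            gcongr
            rw [div_le_one (by linarith)]
            linarith
        _ = _ := mul_one _
    have hgeo := hasSum_geometric_two' (energyQ Ω V p u)
    have hFn : ∀ k, ∫ x in Ω, ‖f k x * |u x| ^ p‖ = ∫ x in Ω, f k x * |u x| ^ p := fun k => by
      congr 1
      ext x
      exact Real.norm_of_nonneg (mul_nonneg (hf0 k x) (by positivity))
    have hsum : Summable fun k => ∫ x in Ω, ‖f k x * |u x| ^ p‖ := by
      refine Summable.of_nonneg_of_le (fun k => integral_nonneg fun x => norm_nonneg _) (fun k => ?_)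
        hgeo.summable
      rw [hFn k]
      exact hFb k
    have hs := hasSum_integral_of_summable_integral_norm (fun k => (hFi k).integrableOn) hsum
    have h1 := hasSum_le hFb hs hgeo
    simpa only [tsum_mul_right] using h1
end

/-- **Strict monotonicity in the potential.** If `V₁ ≤ V₂` a.e. on `Ω`, the set where
`V₁ < V₂` has positive measure, and `Q_{V₁} ≥ 0` on test functions, then `Q_{V₂}` has
a weighted spectral gap in `Ω`. -/
theorem spectralGap_of_potential_mono {d : ℕ} (hd : 2 ≤ d)
    (Ω : Set (Euc d)) (hΩo : IsOpen Ω) (hΩc : IsConnected Ω)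
    {p : ℝ} (hp₁ : 1 < p) (V₁ V₂ : Euc d → ℝ)
    (hV₁ : LocBddPotential Ω V₁) (hV₂ : LocBddPotential Ω V₂)
    (hle : ∀ᵐ x ∂(volume.restrict Ω), V₁ x ≤ V₂ x)
    (hlt : 0 < volume {x ∈ Ω | V₁ x < V₂ x})
    (hQ₁ : ∀ u : Euc d → ℝ, IsTestFun Ω u → 0 ≤ energyQ Ω V₁ p u) :
    HasSpectralGap Ω V₂ p := by
  obtain ⟨hQ₂, hne⟩ := good_nonempty hp₁ hΩo hV₁ hV₂ hle hlt hQ₁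
  exact gap_of_good hp₁ hΩc.nonempty hQ₂ (good_all hp₁ hΩo hΩc hV₂ hQ₂ hne)
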